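/- arXiv:2001.05986 — 9 statements merged into one kernel-verified Lean document; each statement's English description precedes it below -/
import Mathlib

section
/- Let λ ∈ ℂ with λ ∉ ℤ, and let M_λ be the ℂ-vector space with basis (e_n)_{n∈ℤ} equipped with the ℂ-linear operators Q : e_n ↦ e_{n+1} and P : e_n ↦ (n+λ)·e_{n−1}. If U ⊆ M_λ is a ℂ-subspace with P(U) ⊆ U and Q(U) ⊆ U, then U = 0 or U = M_λ. (That is, the Weyl module ℂ[x,x⁻¹]x^λ with p = d/dx and q = x is simple for λ ∉ ℤ.) -/
/-- For `λ ∈ ℂ ∖ ℤ`, the Weyl module `M_λ = ℂ[x,x⁻¹]x^λ` (with basis `(e_n)_{n ∈ ℤ}` realized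
as finitely supported functions `ℤ → ℂ`, `Q : e_n ↦ e_{n+1}` and `P : e_n ↦ (n+λ)·e_{n-1}`) is
simple: any subspace invariant under `P` and `Q` is `0` or everything. -/
theorem weyl_module_typical_simple
    (lam : ℂ) (hlam : ∀ k : ℤ, lam ≠ (k : ℂ))
    (P Q : (ℤ →₀ ℂ) →ₗ[ℂ] (ℤ →₀ ℂ))
    (hP : ∀ n : ℤ, P (Finsupp.single n 1) = ((n : ℂ) + lam) • Finsupp.single (n - 1) 1)
    (hQ : ∀ n : ℤ, Q (Finsupp.single n 1) = Finsupp.single (n + 1) 1)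
    (U : Submodule ℂ (ℤ →₀ ℂ))
    (hPU : ∀ v ∈ U, P v ∈ U) (hQU : ∀ v ∈ U, Q v ∈ U) :
    U = ⊥ ∨ U = ⊤ := by
  have key : ∀ (v : ℤ →₀ ℂ) (k : ℤ), (Q (P v)) k = ((k : ℂ) + lam) * v k := by
    intro v k
    induction v using Finsupp.induction_linear with
    | zero => simp
    | add f g hf hg => simp only [map_add, Finsupp.add_apply, hf, hg]; ring
    | single n c =>
      have h1 : (Finsupp.single n c : ℤ →₀ ℂ) = c • Finsupp.single n 1 := by simp
      rw [h1, map_smul, hP, map_smul, map_smul, hQ, sub_add_cancel]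
      simp only [Finsupp.smul_apply, Finsupp.single_apply, smul_eq_mul]
      split_ifs with h
      · subst h; ring
      · simp
  have step : ∀ (N : ℕ) (v : ℤ →₀ ℂ), v.support.card = N → v ∈ U → v ≠ 0 →
      ∃ m : ℤ, (Finsupp.single m 1 : ℤ →₀ ℂ) ∈ U := by
    intro N
    induction N using Nat.strong_induction_on with
    | _ N ih =>
      intro v hN hv hv0
      obtain ⟨m, hm⟩ := Finsupp.support_nonempty_iff.mpr hv0
      have hm0 : v m ≠ 0 := Finsupp.mem_support_iff.mp hm
      have hw : Q (P v) - ((m : ℂ) + lam) • v ∈ U :=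
        U.sub_mem (hQU _ (hPU _ hv)) (U.smul_mem _ hv)
      have hwk : ∀ k : ℤ, (Q (P v) - ((m : ℂ) + lam) • v) k = ((k : ℂ) - m) * v k := by
        intro k
        rw [Finsupp.sub_apply, key, Finsupp.smul_apply, smul_eq_mul]; ring
      by_cases hz : Q (P v) - ((m : ℂ) + lam) • v = 0
      · refine ⟨m, ?_⟩
        have : (Finsupp.single m 1 : ℤ →₀ ℂ) = (v m)⁻¹ • v := by
          ext k
          rw [Finsupp.smul_apply, smul_eq_mul, Finsupp.single_apply]
          split_ifs with h
          · subst h; exact (inv_mul_cancel₀ hm0).symm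
          · have h2 := hwk k
            rw [hz, Finsupp.zero_apply, eq_comm, mul_eq_zero, sub_eq_zero] at h2
            rcases h2 with h2 | h2
            · exact absurd (Int.cast_injective h2).symm h
            · simp [h2]
        rw [this]
        exact U.smul_mem _ hv
      · refine ih _ ?_ _ rfl hw hz
        rw [← hN]
        apply Finset.card_lt_card
        rw [Finset.ssubset_iff_of_subset]
        · exact ⟨m, hm, by rw [Finsupp.notMem_support_iff, hwk]; simp⟩
        · intro k hk
          rw [Finsupp.mem_support_iff, hwk] at hk
          exact Finsupp.mem_support_iff.mpr (right_ne_zero_of_mul hk)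
  by_cases hU : U = ⊥
  · exact Or.inl hU
  right
  obtain ⟨v, hv, hv0⟩ := U.exists_mem_ne_zero_of_ne_bot hU
  obtain ⟨m, hm⟩ := step _ v rfl hv hv0
  have all : ∀ n : ℤ, (Finsupp.single n 1 : ℤ →₀ ℂ) ∈ U := by
    intro n
    induction n using Int.inductionOn' (b := m) with
    | zero => exact hm
    | succ k _ h => rw [← hQ]; exact hQU _ h
    | pred k _ h =>
      have h1 := hPU _ h
      rw [hP] at h1
      refine (U.smul_mem_iff ?_).mp h1
      intro h0
      apply hlam (-k)
      push_cast
      linear_combination h0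
  rw [eq_top_iff]
  intro f _
  induction f using Finsupp.induction_linear with
  | zero => exact U.zero_mem
  | add f g hf hg => exact U.add_mem (hf trivial) (hg trivial)
  | single n c =>
    have h1 : (Finsupp.single n c : ℤ →₀ ℂ) = c • Finsupp.single n 1 := by simp
    rw [h1]
    exact U.smul_mem _ (all n)
end

section
/- Let λ, μ ∈ ℂ with λ, μ ∉ ℤ, and let M_λ, M_μ be the corresponding modules with operators (P,Q) as below. There exists a ℂ-linear isomorphism φ : M_λ → M_μ satisfying φ∘P = P∘φ and φ∘Q = Q∘φ if and only if λ − μ ∈ ℤ. -/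
/-- For `λ, μ ∈ ℂ ∖ ℤ`, the Weyl modules `M_λ` and `M_μ` (with basis `(e_n)_{n ∈ ℤ}` realized
as finitely supported functions `ℤ → ℂ`, `Q : e_n ↦ e_{n+1}` and `P : e_n ↦ (n+λ)·e_{n-1}`) are
isomorphic (via a linear isomorphism commuting with the operators) if and only if
`λ - μ ∈ ℤ`. -/
theorem weyl_module_typical_iso_iff
    (lam mu : ℂ) (hlam : ∀ k : ℤ, lam ≠ (k : ℂ)) (hmu : ∀ k : ℤ, mu ≠ (k : ℂ))
    (Pl Ql Pm Qm : (ℤ →₀ ℂ) →ₗ[ℂ] (ℤ →₀ ℂ))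
    (hPl : ∀ n : ℤ, Pl (Finsupp.single n 1) = ((n : ℂ) + lam) • Finsupp.single (n - 1) 1)
    (hQl : ∀ n : ℤ, Ql (Finsupp.single n 1) = Finsupp.single (n + 1) 1)
    (hPm : ∀ n : ℤ, Pm (Finsupp.single n 1) = ((n : ℂ) + mu) • Finsupp.single (n - 1) 1)
    (hQm : ∀ n : ℤ, Qm (Finsupp.single n 1) = Finsupp.single (n + 1) 1) :
    (∃ φ : (ℤ →₀ ℂ) ≃ₗ[ℂ] (ℤ →₀ ℂ),
      (∀ v, φ (Pl v) = Pm (φ v)) ∧ (∀ v, φ (Ql v) = Qm (φ v))) ↔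
    ∃ k : ℤ, lam - mu = (k : ℂ) := by
  constructor
  · rintro ⟨φ, hP, hQ⟩
    have hdiag : ∀ (v : ℤ →₀ ℂ) (n : ℤ), (Qm (Pm v)) n = ((n : ℂ) + mu) * v n := by
      intro v n
      induction v using Finsupp.induction_linear with
      | zero => simp
      | add f g hf hg => simp only [map_add, Finsupp.add_apply, hf, hg]; ring
      | single a b =>
        have hb : (Finsupp.single a b : ℤ →₀ ℂ) = b • Finsupp.single a 1 := by simp
        rw [hb, map_smul, map_smul, hPm, map_smul, hQm, sub_add_cancel]
        by_cases h : a = n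
        · subst h; simp; ring
        · simp [Finsupp.single_apply, h]
    have hne : φ (Finsupp.single 0 1) ≠ 0 := by simp
    obtain ⟨n, hn⟩ := Finsupp.ne_iff.mp hne
    have h1 : Qm (Pm (φ (Finsupp.single 0 1))) = lam • φ (Finsupp.single 0 1) := by
      rw [← hP, ← hQ, hPl, map_smul, hQl, map_smul]
      simp
    have h2 := hdiag (φ (Finsupp.single 0 1)) n
    rw [h1, Finsupp.smul_apply, smul_eq_mul] at h2
    have h3 := mul_right_cancel₀ hn h2
    exact ⟨n, by rw [h3]; ring⟩
  · rintro ⟨k, hk⟩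
    have hl : lam = mu + k := by rw [← hk]; ring
    let φ : (ℤ →₀ ℂ) ≃ₗ[ℂ] (ℤ →₀ ℂ) := Finsupp.domLCongr (Equiv.addRight k)
    have hφ : ∀ n : ℤ, φ (Finsupp.single n 1) = Finsupp.single (n + k) 1 := by
      intro n; simp [φ]
    refine ⟨φ, fun v => ?_, fun v => ?_⟩
    · have : φ.toLinearMap ∘ₗ Pl = Pm ∘ₗ φ.toLinearMap := by
        apply Finsupp.lhom_ext'
        intro n
        apply LinearMap.ext_ring
        change φ (Pl (Finsupp.single n 1)) = Pm (φ (Finsupp.single n 1))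
        rw [hPl, map_smul, hφ, hφ, hPm, hl, show n - 1 + k = n + k - 1 by ring]
        congr 1
        push_cast
        ring
      exact LinearMap.congr_fun this v
    · have : φ.toLinearMap ∘ₗ Ql = Qm ∘ₗ φ.toLinearMap := by
        apply Finsupp.lhom_ext'
        intro n
        apply LinearMap.ext_ring
        change φ (Ql (Finsupp.single n 1)) = Qm (φ (Finsupp.single n 1))
        rw [hQl, hφ, hφ, hQm, show n + 1 + k = n + k + 1 by ring]
      exact LinearMap.congr_fun this v
end

section
/- Let D : ℂ[x,x⁻¹] → ℂ[x,x⁻¹] be formal differentiation (xⁿ ↦ n·xⁿ⁻¹) and X : ℂ[x,x⁻¹] → ℂ[x,x⁻¹] multiplication by x. The only ℂ-subspaces U ⊆ ℂ[x,x⁻¹] with D(U) ⊆ U and X(U) ⊆ U are 0, the subspace ℂ[x] of polynomials, and ℂ[x,x⁻¹] itself. In particular ℂ[x] admits no (D,X)-invariant complement, so the extension 0 → ℂ[x] → ℂ[x,x⁻¹] → ℂ[x,x⁻¹]/ℂ[x] → 0 of Weyl modules is non-split and the module Typ₀⁺ = (ℂ[x,x⁻¹], D, X) is indecomposable. -/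
/-- Formal differentiation `xⁿ ↦ n·xⁿ⁻¹` on the Laurent polynomial ring `ℂ[x,x⁻¹]`,
realized as finitely supported functions `ℤ →₀ ℂ` (with `xⁿ` corresponding to
`Finsupp.single n 1`). -/
noncomputable def laurentD : (ℤ →₀ ℂ) →ₗ[ℂ] (ℤ →₀ ℂ) :=
  Finsupp.lsum ℂ (fun n : ℤ => (n : ℂ) • Finsupp.lsingle (n - 1))

/-- Multiplication by `x` on the Laurent polynomial ring `ℂ[x,x⁻¹]`, realized as finitely
supported functions `ℤ →₀ ℂ`. -/
noncomputable def laurentX : (ℤ →₀ ℂ) →ₗ[ℂ] (ℤ →₀ ℂ) :=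
  Finsupp.lsum ℂ (fun n : ℤ => Finsupp.lsingle (n + 1))

/-- The subspace `ℂ[x] ⊆ ℂ[x,x⁻¹]` of (honest) polynomials: Laurent polynomials with no
negative-degree terms. -/
noncomputable def polyPart : Submodule ℂ (ℤ →₀ ℂ) where
  carrier := {f | ∀ n : ℤ, n < 0 → f n = 0}
  add_mem' := by
    intro a b ha hb n hn
    simp [ha n hn, hb n hn]
  zero_mem' := by intro n hn; simp
  smul_mem' := by
    intro c f hf n hn
    simp [hf n hn]

lemma aux_D (n : ℤ) (a : ℂ) :
    laurentD (Finsupp.single n a) = Finsupp.single (n - 1) ((n : ℂ) * a) := by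
  simp [laurentD]

lemma aux_X (n : ℤ) (a : ℂ) :
    laurentX (Finsupp.single n a) = Finsupp.single (n + 1) a := by
  simp [laurentX]

lemma aux_E (f : ℤ →₀ ℂ) (k : ℤ) : laurentX (laurentD f) k = (k : ℂ) * f k := by
  induction f using Finsupp.induction_linear with
  | zero => simp
  | add f g hf hg => simp only [map_add, Finsupp.add_apply, hf, hg]; ring
  | single n a =>
    rw [aux_D, aux_X, sub_add_cancel]
    by_cases h : n = k
    · subst h; simp
    · simp [Finsupp.single_apply, h]

lemma aux_comp (U : Submodule ℂ (ℤ →₀ ℂ))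
    (hD : ∀ f ∈ U, laurentD f ∈ U) (hX : ∀ f ∈ U, laurentX f ∈ U) (n : ℤ) :
    ∀ (c : ℕ) (f : ℤ →₀ ℂ), f.support.card ≤ c → f ∈ U → Finsupp.single n (f n) ∈ U := by
  intro c
  induction c with
  | zero =>
    intro f hc hf
    have h0 : f = 0 := by simpa using hc
    subst h0
    simp
  | succ c ih =>
    intro f hc hf
    by_cases h : ∃ m ∈ f.support, m ≠ n
    · obtain ⟨m, hm, hmn⟩ := h
      have hg : laurentX (laurentD f) - (m : ℂ) • f ∈ U :=
        U.sub_mem (hX _ (hD _ hf)) (U.smul_mem _ hf)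
      have hgk : ∀ k, (laurentX (laurentD f) - (m : ℂ) • f) k = ((k : ℂ) - m) * f k := by
        intro k
        simp only [Finsupp.sub_apply, Finsupp.smul_apply, aux_E, smul_eq_mul]; ring
      have hsub : (laurentX (laurentD f) - (m : ℂ) • f).support ⊆ f.support.erase m := by
        intro k hk
        rw [Finsupp.mem_support_iff, hgk] at hk
        rw [Finset.mem_erase, Finsupp.mem_support_iff]
        refine ⟨?_, right_ne_zero_of_mul hk⟩
        rintro rfl
        simp at hk
      have hcard := Finset.card_le_card hsub
      rw [Finset.card_erase_of_mem hm] at hcard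
      have h1 := ih _ (by omega) hg
      rw [hgk] at h1
      have hne : (n : ℂ) - m ≠ 0 := by
        rw [sub_ne_zero]; exact_mod_cast hmn.symm
      have h2 := U.smul_mem ((n : ℂ) - m)⁻¹ h1
      rwa [Finsupp.smul_single, smul_eq_mul, inv_mul_cancel_left₀ hne] at h2
    · push Not at h
      have : f = Finsupp.single n (f n) := by
        ext k
        by_cases hk : n = k
        · subst hk; simp
        · rw [Finsupp.single_apply, if_neg hk]
          by_contra h0
          exact hk (h k (Finsupp.mem_support_iff.2 h0)).symm
      rwa [← this]

lemma aux_class (U : Submodule ℂ (ℤ →₀ ℂ))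
    (hD : ∀ f ∈ U, laurentD f ∈ U) (hX : ∀ f ∈ U, laurentX f ∈ U) :
    U = ⊥ ∨ U = polyPart ∨ U = ⊤ := by
  have hS : ∀ f ∈ U, ∀ n, f n ≠ 0 → Finsupp.single n (1 : ℂ) ∈ U := by
    intro f hf n hn
    have h := U.smul_mem (f n)⁻¹ (aux_comp U hD hX n _ f le_rfl hf)
    rwa [Finsupp.smul_single, smul_eq_mul, inv_mul_cancel₀ hn] at h
  have hmem : ∀ f : ℤ →₀ ℂ, (∀ n, f n ≠ 0 → Finsupp.single n (1 : ℂ) ∈ U) → f ∈ U := by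
    intro f h
    rw [← Finsupp.sum_single f]
    refine U.sum_mem fun n hn => ?_
    have := U.smul_mem (f n) (h n (Finsupp.mem_support_iff.1 hn))
    simpa using this
  have up : ∀ n, Finsupp.single n (1 : ℂ) ∈ U → ∀ k : ℕ,
      Finsupp.single (n + k) (1 : ℂ) ∈ U := by
    intro n hn k
    induction k with
    | zero => simpa using hn
    | succ k ih =>
      have := hX _ ih
      rw [aux_X] at this
      push_cast
      rwa [← add_assoc]
  have down : ∀ n : ℤ, n ≠ 0 → Finsupp.single n (1 : ℂ) ∈ U →
      Finsupp.single (n - 1) (1 : ℂ) ∈ U := by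
    intro n h0 hn
    have := hD _ hn
    rw [aux_D] at this
    refine hS _ this _ ?_
    simpa using h0
  have downpos : ∀ k : ℕ, Finsupp.single (k : ℤ) (1 : ℂ) ∈ U →
      Finsupp.single (0 : ℤ) (1 : ℂ) ∈ U := by
    intro k
    induction k with
    | zero => intro h; simpa using h
    | succ k ih =>
      intro h
      have := down _ (by omega) h
      apply ih
      simpa using this
  have downneg : ∀ n : ℤ, n < 0 → Finsupp.single n (1 : ℂ) ∈ U → ∀ k : ℕ,
      Finsupp.single (n - k) (1 : ℂ) ∈ U := by
    intro n h0 hn k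
    induction k with
    | zero => simpa using hn
    | succ k ih =>
      have := down _ (by omega) ih
      push_cast
      rwa [← sub_sub]
  by_cases hneg : ∃ n : ℤ, n < 0 ∧ Finsupp.single n (1 : ℂ) ∈ U
  · obtain ⟨n, h0, hn⟩ := hneg
    right; right
    rw [eq_top_iff]
    intro f _
    refine hmem f fun m _ => ?_
    rcases le_total n m with h | h
    · have := up n hn (m - n).toNat
      rwa [show n + ((m - n).toNat : ℤ) = m by omega] at this
    · have := downneg n h0 hn (n - m).toNat
      rwa [show n - ((n - m).toNat : ℤ) = m by omega] at this
  · by_cases hb : U = ⊥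
    · exact Or.inl hb
    right; left
    obtain ⟨f, hf, hf0⟩ := U.ne_bot_iff.1 hb
    obtain ⟨m, hm⟩ := Finsupp.ne_iff.1 hf0
    have hm1 := hS f hf m (by simpa using hm)
    have hm0 : 0 ≤ m := by
      by_contra h
      exact hneg ⟨m, by omega, hm1⟩
    have hz : Finsupp.single (0 : ℤ) (1 : ℂ) ∈ U := by
      apply downpos m.toNat
      rwa [Int.toNat_of_nonneg hm0]
    apply le_antisymm
    · intro g hg n hn
      by_contra h
      exact hneg ⟨n, hn, hS g hg n h⟩
    · intro g hg
      refine hmem g fun n hn => ?_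
      have hn0 : 0 ≤ n := by
        by_contra h
        exact hn (hg n (by omega))
      have := up 0 hz n.toNat
      rwa [zero_add, Int.toNat_of_nonneg hn0] at this

lemma aux_one_mem : Finsupp.single (0 : ℤ) (1 : ℂ) ∈ polyPart := by
  intro n hn
  rw [Finsupp.single_apply, if_neg (by omega)]

lemma aux_ne_top : polyPart ≠ ⊤ := by
  intro h
  have h1 : Finsupp.single (-1 : ℤ) (1 : ℂ) ∈ polyPart := by rw [h]; trivial
  have := h1 (-1) (by omega)
  simp at this

lemma aux_bot_or (U : Submodule ℂ (ℤ →₀ ℂ))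
    (hD : ∀ f ∈ U, laurentD f ∈ U) (hX : ∀ f ∈ U, laurentX f ∈ U) :
    U = ⊥ ∨ Finsupp.single (0 : ℤ) (1 : ℂ) ∈ U := by
  rcases aux_class U hD hX with h | h | h
  · exact Or.inl h
  · right; rw [h]; exact aux_one_mem
  · right; rw [h]; trivial

lemma aux_disj (U V : Submodule ℂ (ℤ →₀ ℂ)) (h : IsCompl U V)
    (hU : Finsupp.single (0 : ℤ) (1 : ℂ) ∈ U) (hV : Finsupp.single (0 : ℤ) (1 : ℂ) ∈ V) :
    False := by
  have := Submodule.disjoint_def.1 h.disjoint _ hU hV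
  simp at this

/-- The only subspaces of `ℂ[x,x⁻¹]` invariant under both differentiation `D` and
multiplication by `x` are `0`, `ℂ[x]` and `ℂ[x,x⁻¹]`.  In particular `ℂ[x]` has no
`(D,X)`-invariant complement (the extension `0 → ℂ[x] → ℂ[x,x⁻¹] → ℂ[x,x⁻¹]/ℂ[x] → 0` is
non-split), and the Weyl module `Typ₀⁺ = (ℂ[x,x⁻¹], D, X)` is indecomposable. -/
theorem laurent_weyl_submodules_classification :
    (∀ U : Submodule ℂ (ℤ →₀ ℂ),
        (∀ f ∈ U, laurentD f ∈ U) → (∀ f ∈ U, laurentX f ∈ U) →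
        U = ⊥ ∨ U = polyPart ∨ U = ⊤) ∧
    (¬ ∃ V : Submodule ℂ (ℤ →₀ ℂ),
        (∀ f ∈ V, laurentD f ∈ V) ∧ (∀ f ∈ V, laurentX f ∈ V) ∧ IsCompl polyPart V) ∧
    (∀ U V : Submodule ℂ (ℤ →₀ ℂ),
        (∀ f ∈ U, laurentD f ∈ U) → (∀ f ∈ U, laurentX f ∈ U) →
        (∀ f ∈ V, laurentD f ∈ V) → (∀ f ∈ V, laurentX f ∈ V) →
        IsCompl U V → U = ⊥ ∨ V = ⊥) := by
  refine ⟨aux_class, ?_, ?_⟩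
  · rintro ⟨V, hD, hX, hc⟩
    rcases aux_bot_or V hD hX with h | h
    · subst h
      exact aux_ne_top (by simpa using hc.sup_eq_top)
    · exact aux_disj _ _ hc aux_one_mem h
  · intro U V hUD hUX hVD hVX hc
    rcases aux_bot_or U hUD hUX with h | h
    · exact Or.inl h
    rcases aux_bot_or V hVD hVX with h' | h'
    · exact Or.inr h'
    exact (aux_disj _ _ hc h h').elim
end

section
/- Let D, X be formal differentiation and multiplication by x on ℂ[x,x⁻¹], and let D̄, X̄ be the induced ℂ-linear operators on the quotient space ℂ[x,x⁻¹]/ℂ[x]. There exists a ℂ-linear isomorphism ψ : ℂ[x,x⁻¹]/ℂ[x] → ℂ[x] such that ψ∘D̄ = X∘ψ and ψ∘X̄ = (−D)∘ψ, where on the target D and X denote differentiation and multiplication by x on ℂ[x]. (That is, the quotient of Typ₀⁺ by its polynomial submodule is isomorphic to the conjugate Weyl module ℂ[x] with p acting as x and q acting as −d/dx.) -/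
/-- the coefficient sequence -/
noncomputable def wA (k : ℕ) : ℂ := (-1) ^ k / (k.factorial : ℂ)

theorem wA_ne (k : ℕ) : wA k ≠ 0 := by
  unfold wA
  have := Nat.factorial_ne_zero k
  apply div_ne_zero
  · simp
  · exact_mod_cast this

theorem wA_succ (k : ℕ) : ((k : ℂ) + 1) * wA (k + 1) = - wA k := by
  unfold wA
  have h1 : (k.factorial : ℂ) ≠ 0 := by exact_mod_cast Nat.factorial_ne_zero k
  have h2 : (k : ℂ) + 1 ≠ 0 := by exact_mod_cast Nat.succ_ne_zero k
  rw [Nat.factorial_succ]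
  push_cast
  field_simp
  ring

/-- the map to polynomials -/
noncomputable def wPhi : (ℤ →₀ ℂ) →ₗ[ℂ] Polynomial ℂ :=
  Finsupp.lsum ℂ (fun n : ℤ => if n < 0 then
    wA (-n - 1).toNat • Polynomial.monomial (-n - 1).toNat else 0)

theorem wPhi_neg (k : ℕ) (c : ℂ) : wPhi (Finsupp.single (-1 - (k : ℤ)) c) =
    Polynomial.monomial k (wA k * c) := by
  have h : (-1 - (k : ℤ)) < 0 := by omega
  have h2 : (-(-1 - (k : ℤ)) - 1).toNat = k := by omega
  simp only [wPhi, Finsupp.lsum_single, h, if_true, h2, LinearMap.smul_apply,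
    Polynomial.smul_monomial, smul_eq_mul]

theorem wPhi_nonneg (n : ℤ) (hn : 0 ≤ n) (c : ℂ) : wPhi (Finsupp.single n c) = 0 := by
  simp [wPhi, not_lt.mpr hn]

theorem wPhi_coeff (f : ℤ →₀ ℂ) (k : ℕ) :
    (wPhi f).coeff k = wA k * f (-1 - (k : ℤ)) := by
  induction f using Finsupp.induction_linear with
  | zero => simp
  | add f g hf hg => simp [hf, hg, mul_add]
  | single n c =>
    rcases lt_or_ge n 0 with h | h
    · obtain ⟨m, rfl⟩ : ∃ m : ℕ, n = -1 - (m : ℤ) := ⟨(-n - 1).toNat, by omega⟩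
      rw [wPhi_neg, Polynomial.coeff_monomial, Finsupp.single_apply]
      by_cases hmk : m = k
      · subst hmk; simp
      · have : ¬ (-1 - (m : ℤ) = -1 - (k : ℤ)) := by omega
        simp [hmk]
    · rw [wPhi_nonneg n h, Finsupp.single_apply, if_neg (by omega)]
      simp

theorem wPhi_ker : LinearMap.ker wPhi = polyPart := by
  ext f
  rw [LinearMap.mem_ker]
  change _ ↔ ∀ n : ℤ, n < 0 → f n = 0
  constructor
  · intro h n hn
    obtain ⟨m, rfl⟩ : ∃ m : ℕ, n = -1 - (m : ℤ) := ⟨(-n - 1).toNat, by omega⟩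
    have := wPhi_coeff f m
    rw [h] at this
    simpa [wA_ne] using this.symm
  · intro h
    ext k
    rw [wPhi_coeff, h _ (by omega)]
    simp

theorem wPhi_surj : Function.Surjective wPhi := by
  intro p
  induction p using Polynomial.induction_on' with
  | add p q hp hq =>
    obtain ⟨a, rfl⟩ := hp
    obtain ⟨b, rfl⟩ := hq
    exact ⟨a + b, map_add _ _ _⟩
  | monomial n a =>
    refine ⟨Finsupp.single (-1 - (n : ℤ)) ((wA n)⁻¹ * a), ?_⟩
    rw [wPhi_neg, mul_inv_cancel_left₀ (wA_ne n)]

theorem laurentD_single (n : ℤ) (c : ℂ) :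
    laurentD (Finsupp.single n c) = Finsupp.single (n - 1) ((n : ℂ) * c) := by
  simp [laurentD]

theorem laurentX_single (n : ℤ) (c : ℂ) :
    laurentX (Finsupp.single n c) = Finsupp.single (n + 1) c := by
  simp [laurentX]

theorem wPhi_D (f : ℤ →₀ ℂ) : wPhi (laurentD f) = Polynomial.X * wPhi f := by
  induction f using Finsupp.induction_linear with
  | zero => simp
  | add f g hf hg => simp [hf, hg, mul_add]
  | single n c =>
    rw [laurentD_single]
    rcases lt_or_ge n 0 with h | h
    · obtain ⟨m, rfl⟩ : ∃ m : ℕ, n = -1 - (m : ℤ) := ⟨(-n - 1).toNat, by omega⟩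
      have e : (-1 - (m : ℤ) - 1) = -1 - ((m + 1 : ℕ) : ℤ) := by push_cast; ring
      rw [e, wPhi_neg, wPhi_neg, Polynomial.X_mul_monomial]
      congr 1
      push_cast
      linear_combination (-c) * wA_succ m
    · rw [wPhi_nonneg n h]
      rcases eq_or_lt_of_le h with h0 | h0
      · subst h0; simp
      · rw [wPhi_nonneg _ (by omega)]; simp

theorem wPhi_X (f : ℤ →₀ ℂ) : wPhi (laurentX f) = - Polynomial.derivative (wPhi f) := by
  induction f using Finsupp.induction_linear with
  | zero => simp
  | add f g hf hg => simp [hf, hg, add_comm]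
  | single n c =>
    rw [laurentX_single]
    rcases lt_or_ge n 0 with h | h
    · obtain ⟨m, rfl⟩ : ∃ m : ℕ, n = -1 - (m : ℤ) := ⟨(-n - 1).toNat, by omega⟩
      rw [wPhi_neg, Polynomial.derivative_monomial]
      cases m with
      | zero => rw [wPhi_nonneg _ (by simp)]; simp
      | succ m =>
        have e : (-1 - ((m + 1 : ℕ) : ℤ) + 1) = -1 - (m : ℤ) := by push_cast; ring
        rw [e, wPhi_neg, ← map_neg, Nat.add_sub_cancel]
        congr 1
        push_cast
        linear_combination c * wA_succ m
    · rw [wPhi_nonneg n h, wPhi_nonneg _ (by omega)]; simp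

/-- The quotient of `Typ₀⁺ = (ℂ[x,x⁻¹], D, X)` by its polynomial submodule `ℂ[x]` is
isomorphic to the conjugate Weyl module `ℂ[x]` with `p` acting as `x` and `q` acting as
`−d/dx`: there is a linear isomorphism `ψ` from the quotient to `ℂ[x]` with
`ψ ∘ D̄ = X ∘ ψ` and `ψ ∘ X̄ = (−D) ∘ ψ`. -/
theorem laurent_quotient_iso_conjugate_weyl_module :
    ∃ ψ : ((ℤ →₀ ℂ) ⧸ polyPart) ≃ₗ[ℂ] Polynomial ℂ,
      (∀ f : ℤ →₀ ℂ,
        ψ (Submodule.Quotient.mk (laurentD f)) =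
          Polynomial.X * ψ (Submodule.Quotient.mk f)) ∧
      (∀ f : ℤ →₀ ℂ,
        ψ (Submodule.Quotient.mk (laurentX f)) =
          - Polynomial.derivative (ψ (Submodule.Quotient.mk f))) := by
  refine ⟨(Submodule.quotEquivOfEq _ _ wPhi_ker.symm).trans
    (wPhi.quotKerEquivOfSurjective wPhi_surj), fun f => ?_, fun f => ?_⟩
  · simpa using wPhi_D f
  · simpa using wPhi_X f
end

section
/- Let M be a ℂ-vector space with ℂ-linear endomorphisms P, Q satisfying P∘Q − Q∘P = id. Suppose S ⊆ M is a subspace with P(S) ⊆ S and Q(S) ⊆ S such that: (a) there is a ℂ-linear isomorphism S → ℂ[x] intertwining (P|_S, Q|_S) with (D, X); (b) there is a ℂ-linear isomorphism M/S → ℂ[x] intertwining the induced operators (P̄, Q̄) with (X, −D); and (c) S admits no complementary subspace invariant under both P and Q. Then there is a ℂ-linear isomorphism M → ℂ[x,x⁻¹] carrying S onto ℂ[x] and intertwining (P, Q) with (D, X). (That is, Typ₀⁺ is uniquely characterised by its non-split short exact sequence of Weyl modules.) -/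
open Polynomial in
noncomputable def tPos : (ℤ →₀ ℂ) →ₗ[ℂ] ℂ[X] :=
  Finsupp.lsum ℂ (fun n : ℤ => match n with
    | Int.ofNat n => Polynomial.monomial n
    | Int.negSucc _ => 0)

open Polynomial in
noncomputable def tNeg : (ℤ →₀ ℂ) →ₗ[ℂ] ℂ[X] :=
  Finsupp.lsum ℂ (fun n : ℤ => match n with
    | Int.ofNat _ => 0
    | Int.negSucc k => ((-1 : ℂ) ^ k / (k.factorial : ℂ)) • Polynomial.monomial k)

theorem tPos_ofNat (n : ℕ) (c : ℂ) :
    tPos (Finsupp.single (Int.ofNat n) c) = Polynomial.monomial n c := by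
  simp only [tPos, Finsupp.lsum_single]

theorem tPos_negSucc (n : ℕ) (c : ℂ) :
    tPos (Finsupp.single (Int.negSucc n) c) = 0 := by
  simp only [tPos, Finsupp.lsum_single, LinearMap.zero_apply]

theorem tNeg_ofNat (n : ℕ) (c : ℂ) :
    tNeg (Finsupp.single (Int.ofNat n) c) = 0 := by
  simp only [tNeg, Finsupp.lsum_single, LinearMap.zero_apply]

theorem tNeg_negSucc (k : ℕ) (c : ℂ) :
    tNeg (Finsupp.single (Int.negSucc k) c) =
      ((-1 : ℂ) ^ k / (k.factorial : ℂ)) • Polynomial.monomial k c := by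
  simp only [tNeg, Finsupp.lsum_single, LinearMap.smul_apply]

theorem coeff_tPos (a : ℤ →₀ ℂ) (n : ℕ) : (tPos a).coeff n = a (Int.ofNat n) := by
  induction a using Finsupp.induction_linear with
  | zero => simp
  | add f g hf hg => simp [hf, hg]
  | single i c =>
    cases i with
    | ofNat m => rw [tPos_ofNat, Polynomial.coeff_monomial, Finsupp.single_apply]; simp
    | negSucc m => rw [tPos_negSucc, Finsupp.single_apply]; simp

theorem coeff_tNeg (a : ℤ →₀ ℂ) (n : ℕ) :
    (tNeg a).coeff n = ((-1 : ℂ) ^ n / (n.factorial : ℂ)) * a (Int.negSucc n) := by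
  induction a using Finsupp.induction_linear with
  | zero => simp
  | add f g hf hg => simp [hf, hg, mul_add]
  | single i c =>
    cases i with
    | ofNat m => rw [tNeg_ofNat, Finsupp.single_apply]; simp
    | negSucc m =>
      rw [tNeg_negSucc, Polynomial.coeff_smul, Polynomial.coeff_monomial, Finsupp.single_apply]
      by_cases h : m = n
      · subst h; simp
      · simp [h]

theorem tNeg_eq_zero_iff (a : ℤ →₀ ℂ) : tNeg a = 0 ↔ a ∈ polyPart := by
  constructor
  · intro h n hn
    cases n with
    | ofNat m => simp at hn; omega
    | negSucc m =>
      have := coeff_tNeg a m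
      rw [h, Polynomial.coeff_zero] at this
      have h2 : ((-1 : ℂ) ^ m / (m.factorial : ℂ)) ≠ 0 :=
        div_ne_zero (pow_ne_zero _ (by norm_num)) (by exact_mod_cast m.factorial_ne_zero)
      exact (mul_eq_zero.mp this.symm).resolve_left h2
  · intro h
    ext m
    rw [coeff_tNeg, h _ (Int.negSucc_lt_zero m)]
    simp

theorem weyl_comm_pow {M : Type} [AddCommGroup M] [Module ℂ M]
    (P Q : M →ₗ[ℂ] M) (hPQ : ∀ m, Q (P m) = P (Q m) - m) (v : M) (n : ℕ) :
    Q ((P ^ (n + 1)) v) = (P ^ (n + 1)) (Q v) - ((n : ℂ) + 1) • (P ^ n) v := by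
  induction n with
  | zero => simp [hPQ]
  | succ n ih =>
    rw [pow_succ' P (n + 1), Module.End.mul_apply, hPQ, ih, map_sub, map_smul,
      Module.End.mul_apply, ← Module.End.mul_apply P (P ^ n), ← pow_succ' P n]
    push_cast
    module

open Polynomial in
noncomputable def hMap {M : Type} [AddCommGroup M] [Module ℂ M]
    (P : M →ₗ[ℂ] M) (v : M) : ℂ[X] →ₗ[ℂ] M :=
  (LinearMap.applyₗ v) ∘ₗ (Polynomial.aeval P : ℂ[X] →ₐ[ℂ] Module.End ℂ M).toLinearMap

theorem hMap_monomial {M : Type} [AddCommGroup M] [Module ℂ M]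
    (P : M →ₗ[ℂ] M) (v : M) (n : ℕ) (c : ℂ) :
    hMap P v (Polynomial.monomial n c) = c • (P ^ n) v := by
  simp [hMap, Polynomial.aeval_monomial]

theorem hMap_X_mul {M : Type} [AddCommGroup M] [Module ℂ M]
    (P : M →ₗ[ℂ] M) (v : M) (q : Polynomial ℂ) :
    hMap P v (Polynomial.X * q) = P (hMap P v q) := by
  simp [hMap]

/-- `Typ₀⁺` is uniquely characterised by its non-split short exact sequence of Weyl modules:
if `M` is a Weyl module (`P∘Q − Q∘P = id`) with an invariant subspace `S` such that (a) `S`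
is isomorphic to the Weyl module `(ℂ[x], D, X)`, (b) `M/S` is isomorphic to the conjugate
Weyl module `(ℂ[x], X, −D)`, and (c) `S` has no invariant complement, then `M` is isomorphic
to `Typ₀⁺ = (ℂ[x,x⁻¹], D, X)` by an isomorphism carrying `S` onto `ℂ[x]`. -/
theorem weyl_module_typzeroplus_unique
    {M : Type} [AddCommGroup M] [Module ℂ M]
    (P Q : M →ₗ[ℂ] M) (hPQ : P ∘ₗ Q - Q ∘ₗ P = LinearMap.id)
    (S : Submodule ℂ M) (hPS : ∀ m ∈ S, P m ∈ S) (hQS : ∀ m ∈ S, Q m ∈ S)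
    -- (a): `S` is isomorphic to the Weyl module `(ℂ[x], D, X)`
    (ha : ∃ e : Polynomial ℂ →ₗ[ℂ] M, Function.Injective e ∧ LinearMap.range e = S ∧
      ∀ p : Polynomial ℂ, P (e p) = e (Polynomial.derivative p) ∧
        Q (e p) = e (Polynomial.X * p))
    -- (b): `M/S` is isomorphic to the conjugate Weyl module `(ℂ[x], X, −D)`
    (hb : ∃ f : M →ₗ[ℂ] Polynomial ℂ, Function.Surjective f ∧ LinearMap.ker f = S ∧
      ∀ m : M, f (P m) = Polynomial.X * f m ∧
        f (Q m) = - Polynomial.derivative (f m))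
    -- (c): `S` has no `(P,Q)`-invariant complement
    (hc : ¬ ∃ V : Submodule ℂ M,
      (∀ m ∈ V, P m ∈ V) ∧ (∀ m ∈ V, Q m ∈ V) ∧ IsCompl S V) :
    ∃ g : M ≃ₗ[ℂ] (ℤ →₀ ℂ),
      S.map (g : M →ₗ[ℂ] (ℤ →₀ ℂ)) = polyPart ∧
      (∀ m : M, g (P m) = laurentD (g m)) ∧
      (∀ m : M, g (Q m) = laurentX (g m)) := by
  have hPQ' : ∀ m, Q (P m) = P (Q m) - m := by
    intro m
    have := LinearMap.congr_fun hPQ m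
    simp only [LinearMap.sub_apply, LinearMap.comp_apply, LinearMap.id_apply] at this
    rw [eq_sub_iff_add_eq, ← eq_sub_iff_add_eq', this]
  obtain ⟨e, einj, erange, he⟩ := ha
  obtain ⟨f, fsurj, fker, hf⟩ := hb
  have hfe : ∀ p, f (e p) = 0 := fun p => by
    rw [← LinearMap.mem_ker, fker, ← erange]; exact ⟨p, rfl⟩
  have hfh : ∀ (v : M) (q : Polynomial ℂ), f (hMap P v q) = q * f v := by
    intro v q
    induction q using Polynomial.induction_on' with
    | add p q hp hq => rw [map_add, map_add, hp, hq, add_mul]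
    | monomial n c =>
      rw [hMap_monomial, map_smul]
      have : ∀ n : ℕ, f ((P ^ n) v) = Polynomial.X ^ n * f v := by
        intro n
        induction n with
        | zero => simp
        | succ n ih => rw [pow_succ' P, Module.End.mul_apply, (hf _).1, ih]; ring
      rw [this, ← Polynomial.C_mul_X_pow_eq_monomial, Polynomial.smul_eq_C_mul, mul_assoc]
  -- the key vector
  obtain ⟨v, c, hv, hQv⟩ : ∃ (v : M) (c : ℂ), f v = 1 ∧ Q v = e (Polynomial.C c) := by
    obtain ⟨v, hv⟩ := fsurj 1
    have h1 : Q v ∈ LinearMap.range e := by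
      rw [erange, ← fker, LinearMap.mem_ker, (hf v).2, hv]; simp
    obtain ⟨p, hp⟩ := h1
    refine ⟨v - e p.divX, p.coeff 0, by rw [map_sub, hv, hfe, sub_zero], ?_⟩
    rw [map_sub, (he _).2, ← hp, ← map_sub]
    congr 1
    rw [sub_eq_iff_eq_add, add_comm, Polynomial.X_mul_divX_add]
  have hc0 : c ≠ 0 := by
    rintro rfl
    apply hc
    rw [map_zero, map_zero] at hQv
    refine ⟨LinearMap.range (hMap P v), ?_, ?_, ?_⟩
    · rintro _ ⟨q, rfl⟩
      exact ⟨Polynomial.X * q, hMap_X_mul P v q⟩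
    · rintro _ ⟨q, rfl⟩
      induction q using Polynomial.induction_on' with
      | add p q hp hq => rw [map_add, map_add]; exact add_mem hp hq
      | monomial n c =>
        rw [hMap_monomial, map_smul]
        apply Submodule.smul_mem
        cases n with
        | zero => simp [hQv]
        | succ n =>
          rw [weyl_comm_pow P Q hPQ', hQv, map_zero, zero_sub]
          apply neg_mem
          exact ⟨Polynomial.monomial n _, hMap_monomial P v n _⟩
    · constructor
      · rw [Submodule.disjoint_def]
        rintro _ hx ⟨q, rfl⟩
        rw [← fker, LinearMap.mem_ker, hfh, hv, mul_one] at hx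
        rw [hx, map_zero]
      · rw [codisjoint_iff, eq_top_iff]
        intro m _
        rw [Submodule.mem_sup]
        refine ⟨m - hMap P v (f m), ?_, hMap P v (f m), ⟨_, rfl⟩, by abel⟩
        rw [← fker, LinearMap.mem_ker, map_sub, hfh, hv, mul_one, sub_self]
  obtain ⟨u, hu, hQu⟩ : ∃ u : M, f u = Polynomial.C c⁻¹ ∧ Q u = e 1 := by
    refine ⟨c⁻¹ • v, ?_, ?_⟩
    · rw [map_smul, hv, Polynomial.smul_eq_C_mul, mul_one]
    · rw [map_smul, hQv, ← map_smul, Polynomial.smul_eq_C_mul, ← Polynomial.C_mul,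
        inv_mul_cancel₀ hc0, Polynomial.C_1]
  let G : (ℤ →₀ ℂ) →ₗ[ℂ] M := e ∘ₗ tPos + hMap P u ∘ₗ tNeg
  have hG : ∀ a, G a = e (tPos a) + hMap P u (tNeg a) := fun a => rfl
  have hfG : ∀ a, f (G a) = 0 ↔ tNeg a = 0 := by
    intro a
    rw [hG, map_add, hfe, hfh, hu, zero_add]
    simp [hc0]
  have Gpos : ∀ n (z : ℂ), G (Finsupp.single (Int.ofNat n) z) = e (Polynomial.monomial n z) := by
    intro n z
    rw [hG, tPos_ofNat, tNeg_ofNat, map_zero, add_zero]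
  have Gneg : ∀ n (z : ℂ), G (Finsupp.single (Int.negSucc n) z) =
      ((-1 : ℂ) ^ n / (n.factorial : ℂ) * z) • (P ^ n) u := by
    intro n z
    rw [hG, tPos_negSucc, tNeg_negSucc, map_zero, zero_add, map_smul, hMap_monomial, smul_smul]
  have Ginj : Function.Injective G := by
    rw [injective_iff_map_eq_zero]
    intro a ha
    have h1 : tNeg a = 0 := by rw [← hfG, ha, map_zero]
    have h2 : tPos a = 0 := by
      rw [hG, h1, map_zero, add_zero] at ha
      exact einj (by rw [ha, map_zero])
    ext i
    cases i with
    | ofNat n => rw [← coeff_tPos, h2]; simp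
    | negSucc n => exact (tNeg_eq_zero_iff a).1 h1 _ (Int.negSucc_lt_zero n)
  have Ge : ∀ p, e p ∈ LinearMap.range G := by
    intro p
    induction p using Polynomial.induction_on' with
    | add p q hp hq => rw [map_add]; exact add_mem hp hq
    | monomial n z => exact ⟨_, Gpos n z⟩
  have Gh : ∀ p, hMap P u p ∈ LinearMap.range G := by
    intro p
    induction p using Polynomial.induction_on' with
    | add p q hp hq => rw [map_add]; exact add_mem hp hq
    | monomial n z =>
      rw [hMap_monomial]
      refine ⟨Finsupp.single (Int.negSucc n) (((-1 : ℂ) ^ n / (n.factorial : ℂ))⁻¹ * z), ?_⟩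
      have h2 : ((-1 : ℂ) ^ n / (n.factorial : ℂ)) ≠ 0 :=
        div_ne_zero (pow_ne_zero _ (by norm_num)) (by exact_mod_cast n.factorial_ne_zero)
      rw [Gneg, mul_inv_cancel_left₀ h2]
  have Gsurj : Function.Surjective G := by
    intro m
    change m ∈ LinearMap.range G
    have h1 : m - hMap P u (Polynomial.C c * f m) ∈ LinearMap.range e := by
      rw [erange, ← fker, LinearMap.mem_ker, map_sub, hfh, hu, mul_right_comm,
        ← Polynomial.C_mul, mul_inv_cancel₀ hc0, Polynomial.C_1, one_mul, sub_self]
    obtain ⟨p, hp⟩ := h1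
    rw [← sub_add_cancel m (hMap P u (Polynomial.C c * f m)), ← hp]
    exact add_mem (Ge _) (Gh _)
  have GD : ∀ a, G (laurentD a) = P (G a) := by
    intro a
    induction a using Finsupp.induction_linear with
    | zero => simp
    | add f g hf hg => simp only [map_add, hf, hg]
    | single i z =>
      rw [laurentD_single]
      cases i with
      | ofNat n =>
        rw [Gpos, (he _).1, Polynomial.derivative_monomial]
        cases n with
        | zero => simp
        | succ n =>
          have : (Int.ofNat (n + 1) - 1 : ℤ) = Int.ofNat n := by simp
          rw [this, Gpos]
          simp [mul_comm]
      | negSucc n =>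
        have : (Int.negSucc n - 1 : ℤ) = Int.negSucc (n + 1) := by omega
        rw [this, Gneg, Gneg, map_smul, pow_succ' P, Module.End.mul_apply]
        congr 1
        rw [Nat.factorial_succ, Int.cast_negSucc]
        have h1 : (n.factorial : ℂ) ≠ 0 := by exact_mod_cast n.factorial_ne_zero
        have h2 : (n : ℂ) + 1 ≠ 0 := by exact_mod_cast n.succ_ne_zero
        push_cast
        field_simp
        ring
  have GX : ∀ a, G (laurentX a) = Q (G a) := by
    intro a
    induction a using Finsupp.induction_linear with
    | zero => simp
    | add f g hf hg => simp only [map_add, hf, hg]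
    | single i z =>
      rw [laurentX_single]
      cases i with
      | ofNat n =>
        have : (Int.ofNat n + 1 : ℤ) = Int.ofNat (n + 1) := by simp
        rw [this, Gpos, Gpos, (he _).2, Polynomial.X_mul_monomial]
      | negSucc n =>
        cases n with
        | zero =>
          have : (Int.negSucc 0 + 1 : ℤ) = Int.ofNat 0 := by simp
          rw [this, Gneg, Gpos, map_smul, pow_zero P, Module.End.one_apply, hQu, ← map_smul]
          simp [Polynomial.smul_eq_C_mul]
        | succ n =>
          have : (Int.negSucc (n + 1) + 1 : ℤ) = Int.negSucc n := by omega
          have h0 : (P ^ (n + 1)) (e 1) = 0 := by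
            rw [pow_succ, Module.End.mul_apply, (he _).1]; simp
          rw [this, Gneg, Gneg, map_smul, weyl_comm_pow P Q hPQ', hQu, h0, zero_sub,
            ← neg_smul, smul_smul]
          congr 1
          rw [Nat.factorial_succ]
          have h1 : (n.factorial : ℂ) ≠ 0 := by exact_mod_cast n.factorial_ne_zero
          have h2 : (n : ℂ) + 1 ≠ 0 := by exact_mod_cast n.succ_ne_zero
          push_cast
          field_simp
          ring
  let E : (ℤ →₀ ℂ) ≃ₗ[ℂ] M := LinearEquiv.ofBijective G ⟨Ginj, Gsurj⟩
  have hE : ∀ a, E a = G a := fun a => rfl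
  refine ⟨E.symm, ?_, ?_, ?_⟩
  · ext a
    rw [← tNeg_eq_zero_iff, ← hfG, ← LinearMap.mem_ker, fker, Submodule.mem_map]
    constructor
    · rintro ⟨m, hm, rfl⟩
      rw [← hE]
      simpa using hm
    · intro h
      exact ⟨G a, h, by rw [← hE]; simp⟩
  · intro m
    rw [LinearEquiv.symm_apply_eq, hE, GD, ← hE, LinearEquiv.apply_symm_apply]
  · intro m
    rw [LinearEquiv.symm_apply_eq, hE, GX, ← hE, LinearEquiv.apply_symm_apply]
end

section
/- Let D, X be formal differentiation and multiplication by x on ℂ[x,x⁻¹]. Every ℂ-linear endomorphism φ of ℂ[x,x⁻¹] satisfying φ∘D = D∘φ and φ∘X = X∘φ is a scalar multiple of the identity. (In particular the Weyl module Typ₀⁺ has endomorphism ring ℂ and is indecomposable.) -/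
theorem laurentD_coeff (f : ℤ →₀ ℂ) (m : ℤ) :
    laurentD f m = ((m : ℂ) + 1) * f (m + 1) := by
  induction f using Finsupp.induction_linear with
  | zero => simp
  | add f g hf hg => rw [map_add, Finsupp.add_apply, hf, hg, Finsupp.add_apply]; ring
  | single n a =>
    by_cases h : n = m + 1
    · subst h
      simp [laurentD]
    · have h' : n - 1 ≠ m := fun e => h (by omega)
      simp [laurentD, Finsupp.single_apply, h, h']

theorem laurentX_coeff (f : ℤ →₀ ℂ) (m : ℤ) :
    laurentX f (m + 1) = f m := by
  induction f using Finsupp.induction_linear with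
  | zero => simp
  | add f g hf hg => rw [map_add laurentX, Finsupp.add_apply, hf, hg, Finsupp.add_apply]
  | single n a => simp [laurentX, Finsupp.single_apply]

/-- Every linear endomorphism of `ℂ[x,x⁻¹]` commuting with both differentiation `D` and
multiplication by `x` is a scalar multiple of the identity; in particular the Weyl module
`Typ₀⁺` has endomorphism ring `ℂ`. -/
theorem laurent_weyl_module_endomorphisms_scalar
    (φ : (ℤ →₀ ℂ) →ₗ[ℂ] (ℤ →₀ ℂ))
    (hD : φ ∘ₗ laurentD = laurentD ∘ₗ φ)
    (hX : φ ∘ₗ laurentX = laurentX ∘ₗ φ) :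
    ∃ c : ℂ, φ = c • LinearMap.id := by
  have hXs : ∀ n m : ℤ, φ (Finsupp.single (n + 1) 1) (m + 1) = φ (Finsupp.single n 1) m := by
    intro n m
    have h := DFunLike.congr_fun (LinearMap.congr_fun hX (Finsupp.single n 1)) (m + 1)
    rw [LinearMap.comp_apply, LinearMap.comp_apply, laurentX_coeff] at h
    rw [← h]
    simp [laurentX]
  have hDs : ∀ n m : ℤ, (n : ℂ) * φ (Finsupp.single (n - 1) 1) m
      = ((m : ℂ) + 1) * φ (Finsupp.single n 1) (m + 1) := by
    intro n m
    have h := DFunLike.congr_fun (LinearMap.congr_fun hD (Finsupp.single n 1)) m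
    rw [LinearMap.comp_apply, LinearMap.comp_apply, laurentD_coeff] at h
    rw [← h]
    have e : laurentD (Finsupp.single n 1) = (n : ℂ) • Finsupp.single (n - 1) (1 : ℂ) := by
      simp [laurentD]
    rw [e, map_smul, Finsupp.smul_apply, smul_eq_mul]
  have hoff : ∀ n m : ℤ, n ≠ m → φ (Finsupp.single n 1) m = 0 := by
    intro n m hnm
    have h1 := hXs (n - 1) (m - 1)
    have h2 := hDs n (m - 1)
    rw [sub_add_cancel, sub_add_cancel] at h1
    rw [sub_add_cancel, ← h1] at h2
    push_cast at h2
    have h3 : ((n : ℂ) - m) * φ (Finsupp.single n 1) m = 0 := by linear_combination h2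
    rcases mul_eq_zero.mp h3 with h | h
    · exact absurd (by exact_mod_cast sub_eq_zero.mp h) hnm
    · exact h
  have hdiag : ∀ n : ℤ, φ (Finsupp.single n 1) n = φ (Finsupp.single 0 1) 0 := by
    intro n
    induction n using Int.induction_on with
    | zero => rfl
    | succ k ih => rw [hXs, ih]
    | pred k ih =>
      have h := hXs (-(k : ℤ) - 1) (-(k : ℤ) - 1)
      rw [sub_add_cancel] at h
      rw [← h, ih]
  refine ⟨φ (Finsupp.single 0 1) 0, ?_⟩
  refine Finsupp.lhom_ext' fun n => LinearMap.ext_ring ?_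
  ext m
  by_cases h : n = m
  · subst h
    simpa using hdiag n
  · simpa [Finsupp.single_apply, h] using hoff n m h
end

section
/- Let W be the rank 1 Weyl algebra over ℂ, the unital associative ℂ-algebra generated by p and q subject only to the relation pq − qp = 1. Let M be a simple W-module such that M is spanned by the eigenvectors of the operator induced by N = qp (i.e. N acts semisimply on M). Then M is isomorphic as a W-module to one of the following: (i) ℂ[x] with p acting as d/dx and q as multiplication by x; (ii) ℂ[x] with p acting as multiplication by x and q as −d/dx; (iii) for some λ ∈ ℂ∖ℤ, the module with basis (e_n)_{n∈ℤ} on which q·e_n = e_{n+1} and p·e_n = (n+λ)·e_{n−1}. -/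
/-- The operator `e_n ↦ (n+λ)·e_{n-1}` on the space `ℤ →₀ ℂ` with basis `(e_n)_{n ∈ ℤ}`:
the action of `p = d/dx` on the Weyl module `ℂ[x,x⁻¹]x^λ`. -/
noncomputable def weylP (lam : ℂ) : (ℤ →₀ ℂ) →ₗ[ℂ] (ℤ →₀ ℂ) :=
  Finsupp.lsum ℂ (fun n : ℤ => ((n : ℂ) + lam) • Finsupp.lsingle (n - 1))

/-- The shift operator `e_n ↦ e_{n+1}` on the space `ℤ →₀ ℂ` with basis `(e_n)_{n ∈ ℤ}`:
the action of `q = x` on the Weyl module `ℂ[x,x⁻¹]x^λ`. -/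
noncomputable def weylQ : (ℤ →₀ ℂ) →ₗ[ℂ] (ℤ →₀ ℂ) :=
  Finsupp.lsum ℂ (fun n : ℤ => Finsupp.lsingle (n + 1))

theorem weylAux1 {M : Type} [AddCommGroup M] [Module ℂ M]
    (P Q : M →ₗ[ℂ] M) (hPQ : P ∘ₗ Q - Q ∘ₗ P = LinearMap.id)
    (hsimple : ∀ U : Submodule ℂ M,
      (∀ m ∈ U, P m ∈ U) → (∀ m ∈ U, Q m ∈ U) → U = ⊥ ∨ U = ⊤)
    (v : M) (hv : v ≠ 0) (hPv : P v = 0) :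
    ∃ e : M ≃ₗ[ℂ] Polynomial ℂ,
      (∀ m, e (P m) = Polynomial.derivative (e m)) ∧
      (∀ m, e (Q m) = Polynomial.X * e m) := by
  have hc : ∀ m, P (Q m) = Q (P m) + m := fun m => by
    have := LinearMap.congr_fun hPQ m
    simp only [LinearMap.sub_apply, LinearMap.comp_apply, LinearMap.id_apply] at this
    rw [add_comm]; exact sub_eq_iff_eq_add.1 this
  let φ : Polynomial ℂ →ₗ[ℂ] M :=
    (LinearMap.applyₗ v : (M →ₗ[ℂ] M) →ₗ[ℂ] M) ∘ₗ
      (Polynomial.aeval (R := ℂ) (A := Module.End ℂ M) Q).toLinearMap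
  have hφ : ∀ f, φ f = (Polynomial.aeval (R := ℂ) (A := Module.End ℂ M) Q f) v := fun f => rfl
  have hX : ∀ f, φ (Polynomial.X * f) = Q (φ f) := fun f => by
    simp [hφ, Module.End.mul_apply]
  have hC : ∀ a, φ (Polynomial.C a) = a • v := fun a => by
    simp [hφ, Module.algebraMap_end_apply]
  have hD : ∀ f, φ (Polynomial.derivative f) = P (φ f) := fun f => by
    induction f using Polynomial.induction_on with
    | C a => simp [hC, hPv]
    | add p q hp hq => simp [hp, hq]
    | monomial n a ih =>
      have : (Polynomial.C a * Polynomial.X ^ (n+1) : Polynomial ℂ) =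
        Polynomial.X * (Polynomial.C a * Polynomial.X ^ n) := by ring
      rw [this, Polynomial.derivative_mul, Polynomial.derivative_X, one_mul, map_add, hX, hX, hc,
        ih, add_comm]
  have hinj : ∀ n : ℕ, ∀ f : Polynomial ℂ, f.natDegree ≤ n → φ f = 0 → f = 0 := by
    intro n
    induction n with
    | zero =>
      intro f hf h
      rw [Polynomial.eq_C_of_natDegree_le_zero hf] at h ⊢
      rw [hC] at h
      rcases smul_eq_zero.1 h with h | h
      · rw [h, map_zero]
      · exact absurd h hv
    | succ n ih =>
      intro f hf h
      have h1 : Polynomial.derivative f = 0 := by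
        apply ih
        · have := Polynomial.natDegree_derivative_le f
          omega
        · rw [hD, h, map_zero]
      apply ih f _ h
      have := Polynomial.derivative_eq_zero.1 h1
      omega
  have hi : Function.Injective φ := by
    rw [← LinearMap.ker_eq_bot, LinearMap.ker_eq_bot']
    exact fun f hf => hinj _ f le_rfl hf
  have hs : LinearMap.range φ = ⊤ := by
    refine (hsimple (LinearMap.range φ) ?_ ?_).resolve_left ?_
    · rintro _ ⟨f, rfl⟩
      exact ⟨_, hD f⟩
    · rintro _ ⟨f, rfl⟩
      exact ⟨_, hX f⟩
    · intro h
      have : v ∈ LinearMap.range φ := ⟨Polynomial.C 1, by rw [hC, one_smul]⟩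
      rw [h] at this
      exact hv (by simpa using this)
  let e := LinearEquiv.ofBijective φ ⟨hi, LinearMap.range_eq_top.1 hs⟩
  have he : ∀ m, φ (e.symm m) = m := fun m => e.apply_symm_apply m
  refine ⟨e.symm, fun m => hi ?_, fun m => hi ?_⟩
  · rw [he, hD, he]
  · rw [he, hX, he]

theorem weylAux3 {M : Type} [AddCommGroup M] [Module ℂ M] [Nontrivial M]
    (P Q : M →ₗ[ℂ] M) (hPQ : P ∘ₗ Q - Q ∘ₗ P = LinearMap.id)
    (hsimple : ∀ U : Submodule ℂ M,
      (∀ m ∈ U, P m ∈ U) → (∀ m ∈ U, Q m ∈ U) → U = ⊥ ∨ U = ⊤)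
    (hsemisimple : ⨆ μ : ℂ, Module.End.eigenspace (Q ∘ₗ P) μ = ⊤)
    (hP : ∀ v, P v = 0 → v = 0) (hQ : ∀ v, Q v = 0 → v = 0) :
    ∃ lam : ℂ, (∀ k : ℤ, lam ≠ (k : ℂ)) ∧
      ∃ e : M ≃ₗ[ℂ] (ℤ →₀ ℂ),
        (∀ m, e (Q m) = weylQ (e m)) ∧
        (∀ m, e (P m) = weylP lam (e m)) := by
  have hc : ∀ m, P (Q m) = Q (P m) + m := fun m => by
    have := LinearMap.congr_fun hPQ m
    simp only [LinearMap.sub_apply, LinearMap.comp_apply, LinearMap.id_apply] at this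
    rw [add_comm]; exact sub_eq_iff_eq_add.1 this
  have hQi : Function.Injective Q := by
    rw [← LinearMap.ker_eq_bot, LinearMap.ker_eq_bot']
    exact hQ
  have hQs : LinearMap.range Q = ⊤ := by
    rw [eq_top_iff, ← hsemisimple]
    refine iSup_le fun μ w hw => ?_
    have hw' : Q (P w) = μ • w := Module.End.mem_eigenspace_iff.1 hw
    by_cases hμ : μ = 0
    · rw [hμ, zero_smul] at hw'
      rw [hP _ (hQ _ hw')]
      exact zero_mem _
    · exact ⟨μ⁻¹ • P w, by rw [map_smul, hw', smul_smul, inv_mul_cancel₀ hμ, one_smul]⟩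
  obtain ⟨lam, v, hv, hv0⟩ : ∃ lam : ℂ, ∃ v : M, Q (P v) = lam • v ∧ v ≠ 0 := by
    by_contra! h
    have : (⨆ μ : ℂ, Module.End.eigenspace (Q ∘ₗ P) μ) ≤ ⊥ :=
      iSup_le fun μ w hw => h μ w (Module.End.mem_eigenspace_iff.1 hw)
    rw [hsemisimple] at this
    exact bot_ne_top (le_bot_iff.1 this).symm
  let q : M ≃ₗ[ℂ] M := LinearEquiv.ofBijective Q ⟨hQi, LinearMap.range_eq_top.1 hQs⟩
  let b : ℤ → M := fun n => (q ^ n : M ≃ₗ[ℂ] M) v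
  have hb0 : b 0 = v := by simp [b]
  have hbQ : ∀ n, Q (b n) = b (n + 1) := fun n => by
    change (q * q ^ n) v = (q ^ (n+1)) v
    rw [add_comm, zpow_add, zpow_one]
  have hbne : ∀ n, b n ≠ 0 := fun n h => hv0 ((LinearEquiv.map_eq_zero_iff _).1 h)
  have hN : ∀ n : ℤ, Q (P (b n)) = ((n : ℂ) + lam) • b n := by
    intro n
    induction n using Int.induction_on with
    | zero => simp [hb0, hv]
    | succ n ih =>
      rw [← hbQ, hc, map_add, ih, map_smul]
      push_cast
      module
    | pred n ih =>
      apply hQi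
      have h1 := hbQ (-(n:ℤ) - 1)
      rw [sub_add_cancel] at h1
      rw [← h1, hc, map_add] at ih
      rw [map_smul, eq_sub_of_add_eq ih]
      push_cast
      module
  have hbP : ∀ n : ℤ, P (b n) = ((n : ℂ) + lam) • b (n - 1) := fun n => by
    apply hQi
    rw [hN, map_smul, hbQ, sub_add_cancel]
  have hlam : ∀ k : ℤ, lam ≠ (k : ℂ) := by
    intro k hk
    have := hbP (-k)
    rw [hk] at this
    push_cast at this
    rw [neg_add_cancel, zero_smul] at this
    exact hbne _ (hP _ this)
  have hli : LinearIndependent ℂ b := by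
    apply Module.End.eigenvectors_linearIndependent' (Q ∘ₗ P) (fun n : ℤ => (n : ℂ) + lam)
    · intro m n h
      simpa using h
    · exact fun n => ⟨Module.End.mem_eigenspace_iff.2 (hN n), hbne n⟩
  let φ : (ℤ →₀ ℂ) →ₗ[ℂ] M := Finsupp.linearCombination ℂ b
  have hi : Function.Injective φ := hli
  have hφQ : ∀ f, φ (weylQ f) = Q (φ f) := by
    have : φ ∘ₗ weylQ = Q ∘ₗ φ := by
      ext n
      simp [φ, weylQ, hbQ]
    exact fun f => LinearMap.congr_fun this f
  have hφP : ∀ f, φ (weylP lam f) = P (φ f) := by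
    have : φ ∘ₗ weylP lam = P ∘ₗ φ := by
      ext n
      simp [φ, weylP, hbP, add_smul]
    exact fun f => LinearMap.congr_fun this f
  have hs : LinearMap.range φ = ⊤ := by
    refine (hsimple (LinearMap.range φ) ?_ ?_).resolve_left ?_
    · rintro _ ⟨f, rfl⟩
      exact ⟨_, hφP f⟩
    · rintro _ ⟨f, rfl⟩
      exact ⟨_, hφQ f⟩
    · intro h
      have : b 0 ∈ LinearMap.range φ := ⟨Finsupp.single 0 1, by simp [φ]⟩
      rw [h] at this
      exact hbne 0 (by simpa using this)
  let e := LinearEquiv.ofBijective φ ⟨hi, LinearMap.range_eq_top.1 hs⟩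
  have he : ∀ m, φ (e.symm m) = m := fun m => e.apply_symm_apply m
  refine ⟨lam, hlam, e.symm, fun m => hi ?_, fun m => hi ?_⟩
  · rw [he, hφQ, he]
  · rw [he, hφP, he]

/-- Block's classification of the simple weight modules over the rank 1 Weyl algebra.
A module over the Weyl algebra `W = ℂ⟨p,q⟩/(pq − qp − 1)` is a complex vector space `M`
together with operators `P, Q` satisfying `P∘Q − Q∘P = id`.  If such a module is simple
and the operator induced by `N = qp` acts semisimply (i.e. `M` is spanned by the
eigenvectors of `Q∘P`), then `M` is isomorphic, as a Weyl module, to one of: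
(i) `ℂ[x]` with `p = d/dx`, `q = x`; (ii) `ℂ[x]` with `p = x`, `q = −d/dx`;
(iii) `ℂ[x,x⁻¹]x^λ` for some `λ ∈ ℂ ∖ ℤ`, with basis `(e_n)_{n∈ℤ}`,
`q·e_n = e_{n+1}` and `p·e_n = (n+λ)·e_{n−1}`. -/
theorem weyl_simple_weight_module_classification
    {M : Type} [AddCommGroup M] [Module ℂ M] [Nontrivial M]
    (P Q : M →ₗ[ℂ] M) (hPQ : P ∘ₗ Q - Q ∘ₗ P = LinearMap.id)
    (hsimple : ∀ U : Submodule ℂ M,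
      (∀ m ∈ U, P m ∈ U) → (∀ m ∈ U, Q m ∈ U) → U = ⊥ ∨ U = ⊤)
    (hsemisimple : ⨆ μ : ℂ, Module.End.eigenspace (Q ∘ₗ P) μ = ⊤) :
    (∃ e : M ≃ₗ[ℂ] Polynomial ℂ,
      (∀ m, e (P m) = Polynomial.derivative (e m)) ∧
      (∀ m, e (Q m) = Polynomial.X * e m)) ∨
    (∃ e : M ≃ₗ[ℂ] Polynomial ℂ,
      (∀ m, e (P m) = Polynomial.X * e m) ∧
      (∀ m, e (Q m) = - Polynomial.derivative (e m))) ∨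
    (∃ lam : ℂ, (∀ k : ℤ, lam ≠ (k : ℂ)) ∧
      ∃ e : M ≃ₗ[ℂ] (ℤ →₀ ℂ),
        (∀ m, e (Q m) = weylQ (e m)) ∧
        (∀ m, e (P m) = weylP lam (e m))) := by
  by_cases hP : ∃ v, v ≠ 0 ∧ P v = 0
  · obtain ⟨v, hv, hPv⟩ := hP
    exact Or.inl (weylAux1 P Q hPQ hsimple v hv hPv)
  by_cases hQ : ∃ v, v ≠ 0 ∧ Q v = 0
  · obtain ⟨v, hv, hQv⟩ := hQ
    refine Or.inr (Or.inl ?_)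
    obtain ⟨e, h1, h2⟩ := weylAux1 (-Q) P
      (by rw [← hPQ, LinearMap.neg_comp, LinearMap.comp_neg]; abel)
      (fun U hU1 hU2 => hsimple U hU2 (fun m hm => by simpa using hU1 m hm)) v hv (by simp [hQv])
    refine ⟨e, h2, fun m => ?_⟩
    rw [← h1]
    simp
  refine Or.inr (Or.inr (weylAux3 P Q hPQ hsimple hsemisimple ?_ ?_))
  · intro v hv
    by_contra h
    exact hP ⟨v, h, hv⟩
  · intro v hv
    by_contra h
    exact hQ ⟨v, h, hv⟩
end

section
/- For every real j with 0 < j < 1, the series Σ_{n=0}^{∞} [((−j)_n (1+j)_n)/(n!)²]·(1/2)ⁿ converges absolutely and its sum equals √π / (Γ((1−j)/2)·Γ(1 + j/2)). (This is the evaluation of ₂F₁(−j, 1+j; 1; 1/2) by Gauss's second summation theorem.) -/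
open Real

lemma aux_beta (a b : ℝ) (ha : 0 < a) (hb : 0 < b) :
    ∫ x in Set.Ioo (0:ℝ) 1, x ^ (a - 1) * (1 - x) ^ (b - 1) =
      Real.Gamma a * Real.Gamma b / Real.Gamma (a + b) := by
  have h := ProbabilityTheory.beta_eq_betaIntegralReal a b ha hb
  rw [ProbabilityTheory.beta] at h
  rw [h, Complex.betaIntegral, intervalIntegral.integral_of_le (by norm_num),
      ← MeasureTheory.integral_Ioc_eq_integral_Ioo, ← RCLike.re_to_complex, ← integral_re]
  · refine MeasureTheory.setIntegral_congr_fun measurableSet_Ioc fun x ⟨hx1, hx₂⟩ ↦ ?_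
    norm_cast
    rw [← Complex.ofReal_cpow, ← Complex.ofReal_cpow, RCLike.re_to_complex,
        Complex.re_mul_ofReal, Complex.ofReal_re]
    all_goals linarith
  · have := Complex.betaIntegral_convergent (u := a) (v := b) (by simpa) (by simpa)
    rw [intervalIntegrable_iff_integrableOn_Ioc_of_le (by norm_num)] at this
    exact this

lemma aux_beta_int (a b : ℝ) (ha : 0 < a) (hb : 0 < b) :
    MeasureTheory.IntegrableOn (fun x : ℝ => x ^ (a - 1) * (1 - x) ^ (b - 1)) (Set.Ioo (0:ℝ) 1) := by
  by_contra h
  have h1 := aux_beta a b ha hb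
  rw [MeasureTheory.integral_undef h] at h1
  have := ProbabilityTheory.beta_pos ha hb
  rw [ProbabilityTheory.beta] at this
  linarith

lemma aux_congr {f g : ℕ → ℝ} {a b : ℝ} (h : HasSum f a) (hf : ∀ n, g n = f n) (hb : b = a) :
    HasSum g b := by
  rw [hb, funext hf]; exact h

lemma aux_binom (a x : ℝ) (hx : |x| < 1) :
    HasSum (fun n : ℕ => (ascPochhammer ℝ n).eval a / (n.factorial : ℝ) * x ^ n)
      ((1 - x) ^ (-a)) := by
  have h := (Real.one_div_one_sub_rpow_hasFPowerSeriesOnBall_zero a).hasSum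
    (y := x) (by simpa [enorm_eq_nnnorm, ← NNReal.coe_lt_coe] using hx)
  have hx1 : 0 ≤ 1 - x := by linarith [(abs_lt.1 hx).2]
  rw [Real.rpow_neg hx1]
  refine aux_congr h ?_ ?_
  · intro n
    have h2 := Ring.factorial_nsmul_multichoose_eq_ascPochhammer a n
    rw [Polynomial.ascPochhammer_smeval_eq_eval, nsmul_eq_mul] at h2
    have h3 : Ring.choose (a + n - 1) n = Ring.multichoose a n := by
      rw [Ring.choose]; congr 1; ring
    have h4 : (n.factorial : ℝ) ≠ 0 := by positivity
    simp [FormalMultilinearSeries.ofScalars, h3]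
    rw [← h2]
    left
    field_simp
  · simp

lemma aux_shift (a : ℝ) (n : ℕ) :
    (ascPochhammer ℝ n).eval (a + 1) * a = (ascPochhammer ℝ n).eval a * (a + n) := by
  induction n with
  | zero => simp
  | succ n ih =>
    rw [ascPochhammer_succ_eval, ascPochhammer_succ_eval]
    push_cast
    linear_combination (a + 1 + n) * ih

lemma aux_gamma (a : ℝ) (ha : 0 < a) (n : ℕ) :
    Real.Gamma (a + n) = (ascPochhammer ℝ n).eval a * Real.Gamma a := by
  induction n with
  | zero => simp
  | succ n ih =>
    rw [ascPochhammer_succ_eval]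
    push_cast
    rw [← add_assoc, Real.Gamma_add_one (by positivity), ih]
    ring

lemma aux_subst (j : ℝ) :
    ∫ s in Set.Ioo (0:ℝ) 1, s ^ ((1 - j / 2) - 1) * (1 - s) ^ (j - 1) =
    2 ^ j * ∫ t in Set.Ioo (0:ℝ) 1, t ^ (j - 1) * (1 - t) ^ (1 - j) * (1 - t / 2) ^ (j - 1) := by
  have him : (fun t : ℝ => (1 - t) ^ 2) '' Set.Ioo 0 1 = Set.Ioo 0 1 := by
    ext y
    constructor
    · rintro ⟨t, ⟨h0, h1⟩, rfl⟩
      constructor <;> simp only <;> nlinarith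
    · rintro ⟨h0, h1⟩
      refine ⟨1 - √y, ⟨?_, ?_⟩, ?_⟩
      · have : √y < 1 := by rw [Real.sqrt_lt' one_pos]; simpa
        linarith
      · have := Real.sqrt_pos.2 h0
        linarith
      · simp [Real.sq_sqrt h0.le]
  have h := MeasureTheory.integral_image_eq_integral_abs_deriv_smul
    (s := Set.Ioo (0:ℝ) 1) (f := fun t : ℝ => (1 - t) ^ 2) (f' := fun t => -(2 * (1 - t)))
    measurableSet_Ioo
    (by
      intro x _
      have := (((hasDerivAt_id x).const_sub 1).pow 2).hasDerivWithinAt (s := Set.Ioo (0:ℝ) 1)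
      refine this.congr_deriv ?_
      simp)
    (by
      rintro x ⟨_, hx⟩ y ⟨_, hy⟩ hxy
      simp only at hxy
      have := (sq_eq_sq₀ (by linarith) (by linarith)).1 hxy
      linarith)
    (fun s : ℝ => s ^ ((1 - j / 2) - 1) * (1 - s) ^ (j - 1))
  rw [him] at h
  rw [h, ← MeasureTheory.integral_const_mul]
  refine MeasureTheory.setIntegral_congr_fun measurableSet_Ioo fun t ⟨h0, h1⟩ ↦ ?_
  have p1 : 0 < 1 - t := by linarith
  have p2 : 0 < 1 - t / 2 := by linarith
  have e1 : 1 - (1 - t) ^ 2 = 2 * (t * (1 - t / 2)) := by ring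
  simp only [smul_eq_mul]
  rw [abs_neg, abs_of_pos (by positivity), e1, Real.mul_rpow (by norm_num) (by positivity),
    Real.mul_rpow h0.le p2.le, ← Real.rpow_natCast (1 - t) 2, ← Real.rpow_mul p1.le]
  have e2 : (1 - t) ^ (1 - j) = (1 - t) * (1 - t) ^ (((2:ℕ):ℝ) * (1 - j / 2 - 1)) := by
    nth_rewrite 2 [← Real.rpow_one (1 - t)]
    rw [← Real.rpow_add p1]
    congr 1; push_cast; ring
  have e3 : (2:ℝ) ^ j = 2 * 2 ^ (j - 1) := by
    rw [Real.rpow_sub_one (by norm_num)]; ring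
  rw [e2, e3]
  ring

lemma aux_main (j : ℝ) (hj0 : 0 < j) (hj1 : j < 1) :
    HasSum (fun n : ℕ => (ascPochhammer ℝ n).eval (-j) * (ascPochhammer ℝ n).eval (1 + j) /
        ((n.factorial : ℝ)) ^ 2 * (1 / 2) ^ n)
      (Real.sqrt π / (Real.Gamma ((1 - j) / 2) * Real.Gamma (1 + j / 2))) := by
  set c : ℕ → ℝ := fun n => (2 * ((ascPochhammer ℝ n).eval (-j) / (n.factorial : ℝ))
    - (ascPochhammer ℝ n).eval (1 - j) / (n.factorial : ℝ)) * (1 / 2) ^ n with hc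
  have hsum : ∀ t : ℝ, |t| ≤ 1 → HasSum (fun n => c n * t ^ n)
      (2 * (1 - t / 2) ^ j - (1 - t / 2) ^ (j - 1)) := by
    intro t ht
    have hx : |t / 2| < 1 := by rw [abs_div]; norm_num; linarith
    have := ((aux_binom (-j) (t / 2) hx).mul_left 2).sub (aux_binom (1 - j) (t / 2) hx)
    refine aux_congr this ?_ ?_
    · intro n; simp only [hc, div_pow]; ring
    · simp
  have hcs : Summable (fun n => |c n|) := by
    have := (hsum 1 (by simp)).summable.abs
    simpa using this
  have hG1 := Real.Gamma_pos_of_pos hj0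
  have hG2 := Real.Gamma_pos_of_pos (show 0 < 1 - j by linarith)
  have hG3 := Real.Gamma_pos_of_pos (show 0 < (1 - j) / 2 by linarith)
  have hG4 := Real.Gamma_pos_of_pos (show 0 < 1 + j / 2 by linarith)
  have hint := MeasureTheory.hasSum_integral_of_dominated_convergence
    (μ := MeasureTheory.volume.restrict (Set.Ioo (0:ℝ) 1))
    (F := fun (n : ℕ) (t : ℝ) => c n * (t ^ ((j + n) - 1) * (1 - t) ^ ((1 - j) - 1)))
    (f := fun t => t ^ (j - 1) * (1 - t) ^ (1 - j) * (1 - t / 2) ^ (j - 1))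
    (fun n t => |c n| * (t ^ (j - 1) * (1 - t) ^ ((1 - j) - 1)))
    (by intro n; fun_prop)
    (by
      intro n
      refine (MeasureTheory.ae_restrict_iff' measurableSet_Ioo).2 (.of_forall ?_)
      rintro t ⟨h0, h1⟩
      have p1 : 0 < 1 - t := by linarith
      have q1 : 0 < t ^ ((j + n) - 1) := by positivity
      have q2 : 0 < (1 - t) ^ ((1 - j) - 1) := by positivity
      rw [norm_mul, Real.norm_eq_abs, Real.norm_eq_abs, abs_of_pos (mul_pos q1 q2)]
      gcongr ?_ * (?_ * ?_)
      exact Real.rpow_le_rpow_of_exponent_ge h0 h1.le (by linarith [n.cast_nonneg (α := ℝ)]))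
    (.of_forall fun t => hcs.mul_right _)
    (by
      simp_rw [tsum_mul_right]
      exact (aux_beta_int j (1 - j) hj0 (by linarith)).const_mul _)
    (by
      refine (MeasureTheory.ae_restrict_iff' measurableSet_Ioo).2 (.of_forall ?_)
      rintro t ⟨h0, h1⟩
      have p1 : 0 < 1 - t := by linarith
      have p2 : 0 < 1 - t / 2 := by linarith
      have := (hsum t (by rw [abs_of_pos h0]; exact h1.le)).mul_right
        (t ^ (j - 1) * (1 - t) ^ ((1 - j) - 1))
      refine aux_congr this ?_ ?_
      · intro n
        rw [show j + n - 1 = (j - 1) + n by ring, Real.rpow_add h0, Real.rpow_natCast]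
        ring
      · rw [Real.rpow_sub_one p1.ne' (1 - j)]
        have : (1 - t / 2) ^ j = (1 - t / 2) * (1 - t / 2) ^ (j - 1) := by
          rw [Real.rpow_sub_one p2.ne', mul_div_cancel₀ _ p2.ne']
        rw [this]
        field_simp
        ring)
  have hsub := aux_subst j
  rw [aux_beta (1 - j / 2) j (by linarith) hj0] at hsub
  have h2 := hint.mul_left (1 / (Real.Gamma j * Real.Gamma (1 - j)))
  refine aux_congr h2 ?_ ?_
  · intro n
    rw [MeasureTheory.integral_const_mul, aux_beta (j + n) (1 - j) (by positivity) (by linarith),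
      aux_gamma j hj0, show j + n + (1 - j) = n + 1 by ring, Real.Gamma_nat_eq_factorial]
    have s1 := aux_shift j n
    have s2 := aux_shift (-j) n
    rw [show -j + 1 = 1 - j by ring] at s2
    rw [add_comm j 1] at s1
    have t1 : (ascPochhammer ℝ n).eval (1 + j) = (ascPochhammer ℝ n).eval j * (j + n) / j := by
      field_simp; linarith
    have t2 : (ascPochhammer ℝ n).eval (1 - j) = (ascPochhammer ℝ n).eval (-j) * (j - n) / j := by
      field_simp; linarith
    simp only [hc]
    rw [t1, t2]
    field_simp
    ring
  · have hd := Real.Gamma_mul_Gamma_add_half ((1 - j) / 2)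
    rw [show (1 - j) / 2 + 1 / 2 = 1 - j / 2 by ring, show 2 * ((1 - j) / 2) = 1 - j by ring,
      show 1 - (1 - j) = j by ring] at hd
    rw [show 1 - j / 2 + j = 1 + j / 2 by ring] at hsub
    have h2j : (0:ℝ) < 2 ^ j := by positivity
    rw [div_eq_iff hG4.ne'] at hsub
    generalize (∫ t in Set.Ioo (0:ℝ) 1, t ^ (j - 1) * (1 - t) ^ (1 - j) * (1 - t / 2) ^ (j - 1)) = I at *
    generalize Real.Gamma (1 + j / 2) = G at *
    rw [div_eq_iff (by positivity)]
    field_simp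
    apply mul_right_cancel₀ h2j.ne'
    linear_combination (-Real.Gamma j) * hd + Real.Gamma ((1 - j) / 2) * hsub



/-- Gauss's second summation theorem at these parameters: for `0 < j < 1`, the series
`₂F₁(−j, 1+j; 1; 1/2)` converges absolutely and equals `√π / (Γ((1−j)/2)·Γ(1 + j/2))`. -/
theorem hypergeometric_neg_j_one_add_j_one_half (j : ℝ) (hj0 : 0 < j) (hj1 : j < 1) :
    Summable (fun n : ℕ =>
      |(ascPochhammer ℝ n).eval (-j) * (ascPochhammer ℝ n).eval (1 + j) /
        ((n.factorial : ℝ)) ^ 2 * (1 / 2) ^ n|) ∧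
    (∑' n : ℕ, (ascPochhammer ℝ n).eval (-j) * (ascPochhammer ℝ n).eval (1 + j) /
        ((n.factorial : ℝ)) ^ 2 * (1 / 2) ^ n) =
      Real.sqrt π / (Real.Gamma ((1 - j) / 2) * Real.Gamma (1 + j / 2)) := by

  have h := aux_main j hj0 hj1
  exact ⟨h.summable.abs, h.tsum_eq⟩
end

section
/- For every real j with 0 < j < 1: Σ_{n=0}^{∞} [((−j)_n (j)_n)/(n!)²]·(1/2)ⁿ = (1/2)·( Σ_{n=0}^{∞} [((1−j)_n (j)_n)/(n!)²]·(1/2)ⁿ + Σ_{n=0}^{∞} [((−j)_n (1+j)_n)/(n!)²]·(1/2)ⁿ ) = (√π/2)·( 1/(Γ(1 − j/2)Γ((1+j)/2)) + 1/(Γ((1−j)/2)Γ(1 + j/2)) ), and in particular ₂F₁(−j, j; 1; 1/2) = Σ_{n=0}^{∞} [((−j)_n (j)_n)/(n!)²]·(1/2)ⁿ is strictly positive (hence nonzero). -/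
open Real

noncomputable def pw (x : ℝ) (n : ℕ) : ℝ := (ascPochhammer ℝ n).eval x

lemma pw_zero (x : ℝ) : pw x 0 = 1 := by simp [pw]

lemma pw_succ (x : ℝ) (n : ℕ) : pw x (n+1) = pw x n * (x + n) := by
  simp [pw, ascPochhammer_succ_eval]

lemma pw_shift (x : ℝ) (n : ℕ) : x * pw (x+1) n = pw x n * (x + n) := by
  induction n with
  | zero => simp [pw_zero]
  | succ n ih =>
    rw [pw_succ, pw_succ, ← mul_assoc, ih]; push_cast; ring

lemma pw_pos (x : ℝ) (hx : 0 < x) (n : ℕ) : 0 < pw x n := ascPochhammer_pos n x hx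

lemma pw_abs_le (a : ℝ) (b : ℝ) (hab : |a| ≤ b) (n : ℕ) : |pw a n| ≤ pw b n := by
  induction n with
  | zero => simp [pw_zero]
  | succ n ih =>
    rw [pw_succ, pw_succ, abs_mul]
    have h0 : |a + n| ≤ b + n := by
      refine (abs_add_le _ _).trans ?_
      rw [Nat.abs_cast]; linarith
    exact mul_le_mul ih h0 (abs_nonneg _) ((abs_nonneg _).trans ih)

lemma pw_one (n : ℕ) : pw 1 n = n.factorial := by
  induction n with
  | zero => simp [pw_zero]
  | succ n ih => rw [pw_succ, ih, Nat.factorial_succ]; push_cast; ring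

lemma pw_two (n : ℕ) : pw 2 n = n.factorial * (n + 1) := by
  have := pw_shift 1 n
  rw [pw_one] at this
  norm_num at this
  rw [this]; ring

noncomputable def tt (a c : ℝ) (n : ℕ) : ℝ :=
  pw a n * pw (1 - a) n / (pw c n * n.factorial) * (1/2)^n

lemma pw_ge (c : ℝ) (hc : 1 ≤ c) (n : ℕ) : (n.factorial : ℝ) ≤ pw c n := by
  rw [← pw_one]
  have := pw_abs_le 1 c (by simpa using hc) n
  exact (le_abs_self _).trans this

lemma tt_num (a : ℝ) (ha : |a| < 1) (n : ℕ) :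
    |pw a n * pw (1 - a) n| ≤ n.factorial * (n.factorial * (n+1)) := by
  rw [abs_mul, ← pw_two, ← pw_one]
  have h := abs_lt.1 ha
  refine mul_le_mul (pw_abs_le _ _ ha.le n) (pw_abs_le _ _ ?_ n) (abs_nonneg _) (pw_pos 1 one_pos n).le
  rw [abs_le]; constructor <;> linarith

lemma tt_abs (a c d : ℝ) (ha : |a| < 1) (hd : 0 < d) (n : ℕ) (h : d * n.factorial ≤ pw c n) :
    |tt a c n| ≤ (n+1) * (1/2)^n / d := by
  have hf : (0:ℝ) < n.factorial := by positivity
  have hp : 0 < pw c n := lt_of_lt_of_le (by positivity) h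
  unfold tt
  rw [abs_mul, abs_div, abs_of_pos (mul_pos hp hf), abs_of_pos (a := ((1:ℝ)/2)^n) (by positivity)]
  have : |pw a n * pw (1 - a) n| / (pw c n * n.factorial) ≤ (n+1)/d := by
    rw [div_le_div_iff₀ (by positivity) hd]
    calc _ ≤ n.factorial * (n.factorial * (n+1)) * d := by
            gcongr; exact tt_num a ha n
      _ = (n+1) * ((d * n.factorial) * n.factorial) := by ring
      _ ≤ _ := by gcongr
  calc _ ≤ (n+1)/d * (1/2:ℝ)^n := by gcongr
    _ = _ := by ring

lemma summ_bound : Summable (fun n : ℕ => ((n:ℝ)+1) * (1/2)^n) := by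
  have h1 := summable_pow_mul_geometric_of_norm_lt_one (R := ℝ) 1 (r := 1/2) (by norm_num)
  have h2 : Summable (fun n : ℕ => (1/2:ℝ)^n) := summable_geometric_of_lt_one (by norm_num) (by norm_num)
  refine (h1.add h2).congr ?_
  intro n; ring

lemma tt_summ (a c : ℝ) (ha : |a| < 1) (hc : 1 ≤ c) : Summable (tt a c) := by
  refine Summable.of_norm_bounded summ_bound ?_
  intro n
  have := tt_abs a c 1 ha one_pos n (by simpa using pw_ge c hc n)
  simpa using this

lemma tt_wz (a c : ℝ) (hc : 1 ≤ c) (n : ℕ) :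
    (c+a)*(c+1-a) * tt a (c+2) n - c*(c+1)*tt a c n =
      2*c*(c+1)*((n+1:ℕ)/(c+(n+1:ℕ))) * tt a c (n+1) - 2*c*(c+1)*(n/(c+n)) * tt a c n := by
  have h2 : pw (c+2) n = pw c n * (c+n) * (c+n+1) / (c*(c+1)) := by
    have e1 := pw_shift c n
    have e2 := pw_shift (c+1) n
    rw [show c+1+1 = c+2 by ring] at e2
    rw [eq_div_iff (by positivity)]
    linear_combination c * e2 + (c+1+n) * e1
  have hp := (pw_pos c (by linarith) n).ne'
  have hn : c + n ≠ 0 := by positivity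
  have hn1 : c + n + 1 ≠ 0 := by positivity
  have hn2 : c + (n + 1) ≠ 0 := by positivity
  have hc0 : c ≠ 0 := by positivity
  have hc1 : c + 1 ≠ 0 := by positivity
  have hf : (n.factorial : ℝ) ≠ 0 := by positivity
  have hn3 : (n:ℝ) + 1 ≠ 0 := by positivity
  unfold tt
  rw [h2, pw_succ, pw_succ, pw_succ, Nat.factorial_succ, pow_succ]
  push_cast
  generalize ((1:ℝ)/2)^n = q
  generalize pw a n = A at *
  generalize pw (1-a) n = B at *
  generalize pw c n = C at *
  rw [← add_assoc] 
  field_simp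
  ring

noncomputable def gg (a c : ℝ) : ℝ := ∑' n, tt a c n

lemma gg_rec (a c : ℝ) (ha : |a| < 1) (hc : 1 ≤ c) :
    (c+a)*(c+1-a) * gg a (c+2) = c*(c+1) * gg a c := by
  have s1 := tt_summ a c ha hc
  have s2 := tt_summ a (c+2) ha (by linarith)
  set G : ℕ → ℝ := fun n => 2*c*(c+1)*(n/(c+n)) * tt a c n with hG
  have sG : Summable G := by
    refine Summable.of_norm_bounded (s1.norm.mul_left (2*c*(c+1))) ?_
    intro n
    simp only [hG]
    rw [norm_mul]
    gcongr
    rw [Real.norm_of_nonneg (by positivity)]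
    have : (n:ℝ)/(c+n) ≤ 1 := by
      rw [div_le_one (by positivity)]; linarith
    exact mul_le_of_le_one_right (by positivity) this
  have e : ∑' n, ((c+a)*(c+1-a) * tt a (c+2) n - c*(c+1)*tt a c n) = ∑' n, (G (n+1) - G n) :=
    tsum_congr (fun n => tt_wz a c hc n)
  rw [((s2.mul_left _).tsum_sub (s1.mul_left _)), tsum_mul_left, tsum_mul_left,
    ((summable_nat_add_iff 1).2 sG).tsum_sub sG, sG.tsum_eq_zero_add] at e
  have : G 0 = 0 := by simp [hG]
  unfold gg
  rw [this] at e
  linarith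

lemma gg_bound (a c : ℝ) (ha : |a| < 1) (hc : 1 ≤ c) :
    |gg a c - 1| ≤ (∑' n : ℕ, (((n+1:ℕ):ℝ)+1) * (1/2)^(n+1)) / c := by
  have s1 := tt_summ a c ha hc
  have h0 : tt a c 0 = 1 := by simp [tt, pw_zero]
  unfold gg
  rw [s1.tsum_eq_zero_add, h0, add_sub_cancel_left, ← tsum_div_const, ← Real.norm_eq_abs]
  refine tsum_of_norm_bounded (((summable_nat_add_iff 1).2 summ_bound).div_const c).hasSum ?_
  intro n
  refine tt_abs a c c ha (by linarith) (n+1) ?_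
  rw [pw_succ, ← pw_shift]
  gcongr
  have := pw_abs_le 2 (c+1) (by rw [abs_of_pos] <;> linarith) n
  rw [abs_of_pos (pw_pos 2 two_pos n), pw_two] at this
  rw [Nat.factorial_succ]; push_cast; linarith

lemma gg_tendsto (a : ℝ) (ha : |a| < 1) :
    Filter.Tendsto (fun n : ℕ => gg a (1 + 2*((n+1:ℕ):ℝ))) Filter.atTop (nhds 1) := by
  rw [tendsto_iff_dist_tendsto_zero]
  refine squeeze_zero (fun _ => dist_nonneg)
    (fun n => gg_bound a (1 + 2*((n+1:ℕ):ℝ)) ha (by have : (0:ℝ) ≤ ((n+1:ℕ):ℝ) := by positivity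
                                                    linarith)) ?_
  refine Filter.Tendsto.div_atTop tendsto_const_nhds ?_
  refine Filter.tendsto_atTop_add_const_left _ _ ?_
  refine Filter.Tendsto.const_mul_atTop two_pos ?_
  exact (tendsto_natCast_atTop_atTop).comp (Filter.tendsto_add_atTop_nat 1)

lemma gg_prod (a : ℝ) (ha : |a| < 1) (n : ℕ) :
    gg a 1 * ((∏ k ∈ Finset.range n, ((1/2:ℝ) + k)) * ∏ k ∈ Finset.range n, ((1:ℝ) + k)) =
    gg a (1 + 2*(n:ℝ)) * ((∏ k ∈ Finset.range n, ((1+a)/2 + k)) *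
      ∏ k ∈ Finset.range n, (1-a/2 + k)) := by
  induction n with
  | zero => simp
  | succ n ih =>
    have h := gg_rec a (1+2*n) ha (by have : (0:ℝ) ≤ n := by positivity
                                      linarith)
    rw [show (1+2*(n:ℝ)+2) = 1 + 2*((n+1:ℕ):ℝ) by push_cast; ring] at h
    simp only [Finset.prod_range_succ]
    generalize gg a (1 + 2*((n+1:ℕ):ℝ)) = g' at *
    generalize (∏ k ∈ Finset.range n, ((1+a)/2 + (k:ℝ))) = X at *
    generalize (∏ k ∈ Finset.range n, (1-a/2 + (k:ℝ))) = Y at *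
    linear_combination (1/2+(n:ℝ))*(1+n) * ih - X*Y/4*h

lemma gg_eval (a : ℝ) (ha : |a| < 1) :
    gg a 1 = √π / (Real.Gamma ((1+a)/2) * Real.Gamma (1-a/2)) := by
  have h := abs_lt.1 ha
  have p1 : 0 < (1+a)/2 := by linarith
  have p2 : 0 < 1-a/2 := by linarith
  have key : ∀ n : ℕ, 0 < n → gg a 1 * (Real.GammaSeq ((1+a)/2) n * Real.GammaSeq (1-a/2) n) =
      gg a (1 + 2*((n+1:ℕ):ℝ)) * (Real.GammaSeq (1/2) n * Real.GammaSeq 1 n) := by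
    intro n hn
    have hn' : (0:ℝ) < n := by exact_mod_cast hn
    have e := gg_prod a ha (n+1)
    have e2 : (n:ℝ)^((1+a)/2) * (n:ℝ)^(1-a/2) = (n:ℝ)^(1/2:ℝ) * (n:ℝ)^(1:ℝ) := by
      rw [← Real.rpow_add hn', ← Real.rpow_add hn']; congr 1; ring
    unfold Real.GammaSeq
    have q : ∀ s : ℝ, 0 < s → (∏ k ∈ Finset.range (n+1), (s + (k:ℝ))) ≠ 0 := fun s hs =>
      (Finset.prod_pos (fun k _ => by positivity)).ne'
    have q1 := q _ p1
    have q2 := q _ p2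
    have q3 := q (1/2) (by norm_num)
    have q4 := q 1 (by norm_num)
    generalize (∏ k ∈ Finset.range (n+1), ((1+a)/2 + (k:ℝ))) = X at *
    generalize (∏ k ∈ Finset.range (n+1), (1-a/2 + (k:ℝ))) = Y at *
    generalize (∏ k ∈ Finset.range (n+1), ((1/2:ℝ) + (k:ℝ))) = Z at *
    generalize (∏ k ∈ Finset.range (n+1), ((1:ℝ) + (k:ℝ))) = W at *
    generalize gg a (1 + 2*((n+1:ℕ):ℝ)) = g' at *
    generalize (n:ℝ)^((1+a)/2) = u1 at *
    generalize (n:ℝ)^(1-a/2) = u2 at *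
    generalize (n:ℝ)^(1/2:ℝ) = u3 at *
    generalize (n:ℝ)^(1:ℝ) = u4 at *
    generalize (n.factorial:ℝ) = f at *
    rw [div_mul_div_comm, div_mul_div_comm, ← mul_div_assoc, ← mul_div_assoc,
      div_eq_div_iff (mul_ne_zero q1 q2) (mul_ne_zero q3 q4)]
    linear_combination f^2*u1*u2*e + g'*f^2*X*Y*e2
  have L := ((Real.GammaSeq_tendsto_Gamma ((1+a)/2)).mul
    (Real.GammaSeq_tendsto_Gamma (1-a/2))).const_mul (gg a 1)
  have R := (gg_tendsto a ha).mul ((Real.GammaSeq_tendsto_Gamma (1/2)).mul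
    (Real.GammaSeq_tendsto_Gamma 1))
  have E := tendsto_nhds_unique (L.congr' (by
    filter_upwards [Filter.eventually_gt_atTop 0] with n hn using key n hn)) R
  rw [Real.Gamma_one_half_eq, Real.Gamma_one] at E
  rw [eq_div_iff (mul_pos (Real.Gamma_pos_of_pos p1) (Real.Gamma_pos_of_pos p2)).ne', E]
  ring

/-- The contiguous relation at `(a,b,c,t) = (−j, j, 1, 1/2)` together with the evaluations
of `₂F₁(1−j, j; 1; 1/2)` and `₂F₁(−j, 1+j; 1; 1/2)`: for `0 < j < 1`,
`₂F₁(−j, j; 1; 1/2) = (1/2)·(₂F₁(1−j, j; 1; 1/2) + ₂F₁(−j, 1+j; 1; 1/2))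
  = (√π/2)·(1/(Γ(1 − j/2)Γ((1+j)/2)) + 1/(Γ((1−j)/2)Γ(1 + j/2)))`,
and in particular `₂F₁(−j, j; 1; 1/2)` is strictly positive. -/
theorem hypergeometric_neg_j_j_one_half_positive (j : ℝ) (hj0 : 0 < j) (hj1 : j < 1) :
    (∑' n : ℕ, (ascPochhammer ℝ n).eval (-j) * (ascPochhammer ℝ n).eval j /
        ((n.factorial : ℝ)) ^ 2 * (1 / 2) ^ n) =
      (1 / 2) *
        ((∑' n : ℕ, (ascPochhammer ℝ n).eval (1 - j) * (ascPochhammer ℝ n).eval j /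
            ((n.factorial : ℝ)) ^ 2 * (1 / 2) ^ n) +
          (∑' n : ℕ, (ascPochhammer ℝ n).eval (-j) * (ascPochhammer ℝ n).eval (1 + j) /
            ((n.factorial : ℝ)) ^ 2 * (1 / 2) ^ n)) ∧
    (∑' n : ℕ, (ascPochhammer ℝ n).eval (-j) * (ascPochhammer ℝ n).eval j /
        ((n.factorial : ℝ)) ^ 2 * (1 / 2) ^ n) =
      (Real.sqrt π / 2) *
        (1 / (Real.Gamma (1 - j / 2) * Real.Gamma ((1 + j) / 2)) +
          1 / (Real.Gamma ((1 - j) / 2) * Real.Gamma (1 + j / 2))) ∧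
    0 < ∑' n : ℕ, (ascPochhammer ℝ n).eval (-j) * (ascPochhammer ℝ n).eval j /
        ((n.factorial : ℝ)) ^ 2 * (1 / 2) ^ n := by
  have ha : |j| < 1 := by rw [abs_of_pos hj0]; exact hj1
  have hb : |-j| < 1 := by rwa [abs_neg]
  have t1 : ∀ n : ℕ, (ascPochhammer ℝ n).eval (1 - j) * (ascPochhammer ℝ n).eval j /
            ((n.factorial : ℝ)) ^ 2 * (1 / 2) ^ n = tt j 1 n := by
    intro n
    unfold tt
    rw [pw_one]; unfold pw; ring
  have t2 : ∀ n : ℕ, (ascPochhammer ℝ n).eval (-j) * (ascPochhammer ℝ n).eval (1 + j) /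
            ((n.factorial : ℝ)) ^ 2 * (1 / 2) ^ n = tt (-j) 1 n := by
    intro n
    unfold tt
    rw [pw_one, sub_neg_eq_add]; unfold pw; ring
  have t0 : ∀ n : ℕ, (ascPochhammer ℝ n).eval (-j) * (ascPochhammer ℝ n).eval j /
        ((n.factorial : ℝ)) ^ 2 * (1 / 2) ^ n = (1/2) * (tt j 1 n + tt (-j) 1 n) := by
    intro n
    unfold tt
    rw [pw_one, sub_neg_eq_add]
    have e1 := pw_shift j n
    have e2 := pw_shift (-j) n
    rw [add_comm j 1] at e1
    rw [show -j + 1 = 1 - j by ring] at e2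
    change pw (-j) n * pw j n / _ * _ = _
    have e3 : pw (-j) n * pw j n = 1/2 * (pw j n * pw (1-j) n + pw (-j) n * pw (1+j) n) := by
      apply mul_left_cancel₀ hj0.ne'
      linear_combination (1/2) * pw j n * e2 - (1/2) * pw (-j) n * e1
    rw [e3]; ring
  simp only [t0, t1, t2]
  have s1 := tt_summ j 1 ha le_rfl
  have s2 := tt_summ (-j) 1 hb le_rfl
  rw [tsum_mul_left, s1.tsum_add s2]
  have v1 := gg_eval j ha
  have v2 := gg_eval (-j) hb
  unfold gg at v1 v2
  rw [v1, v2, show (1 + -j)/2 = (1-j)/2 by ring, show 1 - -j/2 = 1 + j/2 by ring]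
  have g1 : 0 < Real.Gamma (1 - j/2) := Real.Gamma_pos_of_pos (by linarith)
  have g2 : 0 < Real.Gamma ((1 + j)/2) := Real.Gamma_pos_of_pos (by linarith)
  have g3 : 0 < Real.Gamma ((1 - j)/2) := Real.Gamma_pos_of_pos (by linarith)
  have g4 : 0 < Real.Gamma (1 + j/2) := Real.Gamma_pos_of_pos (by linarith)
  refine ⟨rfl, by ring, by positivity⟩
end
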